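/- arXiv:2211.17261 — 5 statements merged into one kernel-verified Lean document; each statement's English description precedes it below -/
import Mathlib

section
/- Let p be a prime and B a commutative ring with p·B = 0. Then the center of the Weyl algebra W_d(B) is exactly the B-subalgebra generated by the 2d elements x_1^p, …, x_d^p, y_1^p, …, y_d^p, and these elements are algebraically independent over B; that is, the center of W_d(B) is isomorphic as a B-algebra to a polynomial ring over B in 2d variables, via the map sending the variables to x_i^p and y_i^p. -/
/-!
Statement 0: For a prime `p` and a commutative ring `B` with `p·B = 0`, the center of the
Weyl algebra `W_d(B)` is exactly the `B`-subalgebra generated by the elements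
`x_1^p, …, x_d^p, y_1^p, …, y_d^p`, and these are algebraically independent over `B`;
i.e. the center is the image of a polynomial ring under the (injective) `B`-algebra map
sending the variables to the `x_i^p` and `y_j^p`.
-/

noncomputable section

open FreeAlgebra

/-- The defining relations of the Weyl algebra `W_d(B)`: the `x_i` (indexed by `Sum.inl i`)
commute with each other, the `y_j` (indexed by `Sum.inr j`) commute with each other, and
`y_j x_i = x_i y_j + δ_{ij}`. -/
inductive WeylRel (B : Type) [CommRing B] (d : ℕ) :
    FreeAlgebra B (Fin d ⊕ Fin d) → FreeAlgebra B (Fin d ⊕ Fin d) → Prop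
  | xx (i j : Fin d) :
      WeylRel B d (ι B (Sum.inl i) * ι B (Sum.inl j)) (ι B (Sum.inl j) * ι B (Sum.inl i))
  | yy (i j : Fin d) :
      WeylRel B d (ι B (Sum.inr i) * ι B (Sum.inr j)) (ι B (Sum.inr j) * ι B (Sum.inr i))
  | yx (i j : Fin d) :
      WeylRel B d (ι B (Sum.inr j) * ι B (Sum.inl i))
        (ι B (Sum.inl i) * ι B (Sum.inr j) + if i = j then 1 else 0)

/-- The Weyl algebra `W_d(B)`: the quotient of the free associative `B`-algebra on
`x_1, …, x_d, y_1, …, y_d` by the two-sided ideal generated by the Weyl relations. -/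
abbrev WeylAlgebra (B : Type) [CommRing B] (d : ℕ) : Type := RingQuot (WeylRel B d)

/-- The images of the generators in the Weyl algebra (`Sum.inl i ↦ x_i`, `Sum.inr j ↦ y_j`). -/
def weylGen (B : Type) [CommRing B] (d : ℕ) (v : Fin d ⊕ Fin d) : WeylAlgebra B d :=
  RingQuot.mkAlgHom B (WeylRel B d) (ι B v)

open MvPolynomial in
open scoped IsMulCommutative in
theorem exists_aeval_of_comm {B A σ : Type} [CommRing B] [Ring A] [Algebra B A] (a : σ → A)
    (h : ∀ i j, a i * a j = a j * a i) :
    ∃ F : MvPolynomial σ B →ₐ[B] A, ∀ i, F (X i) = a i := by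
  have hc : IsMulCommutative (Algebra.adjoin B (Set.range a)) := by
    apply Algebra.isMulCommutative_adjoin
    rintro _ ⟨i, rfl⟩ _ ⟨j, rfl⟩
    exact h i j
  refine ⟨(Algebra.adjoin B (Set.range a)).val.comp
    (aeval (R := B) (S₁ := Algebra.adjoin B (Set.range a))
      (fun i => ⟨a i, Algebra.subset_adjoin ⟨i, rfl⟩⟩)), fun i => ?_⟩
  simp

theorem weyl_xx {B : Type} [CommRing B] {d : ℕ} (i j : Fin d) :
    weylGen B d (Sum.inl i) * weylGen B d (Sum.inl j)
      = weylGen B d (Sum.inl j) * weylGen B d (Sum.inl i) := by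
  simpa [weylGen] using RingQuot.mkAlgHom_rel B (WeylRel.xx (B := B) i j)

theorem weyl_yy {B : Type} [CommRing B] {d : ℕ} (i j : Fin d) :
    weylGen B d (Sum.inr i) * weylGen B d (Sum.inr j)
      = weylGen B d (Sum.inr j) * weylGen B d (Sum.inr i) := by
  simpa [weylGen] using RingQuot.mkAlgHom_rel B (WeylRel.yy (B := B) i j)

theorem weyl_yx {B : Type} [CommRing B] {d : ℕ} (i j : Fin d) :
    weylGen B d (Sum.inr j) * weylGen B d (Sum.inl i)
      = weylGen B d (Sum.inl i) * weylGen B d (Sum.inr j) + if i = j then 1 else 0 := by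
  have := RingQuot.mkAlgHom_rel B (WeylRel.yx (B := B) i j)
  rw [map_add, map_mul, map_mul] at this
  rw [weylGen, weylGen, this]
  split_ifs <;> simp

theorem weyl_induction {B : Type} [CommRing B] {d : ℕ} {P : WeylAlgebra B d → Prop}
    (h0 : ∀ r, P (algebraMap B _ r)) (h1 : ∀ v, P (weylGen B d v))
    (hm : ∀ a b, P a → P b → P (a * b)) (ha : ∀ a b, P a → P b → P (a + b)) (w) : P w := by
  obtain ⟨w, rfl⟩ := RingQuot.mkAlgHom_surjective B (WeylRel B d) w
  induction w using FreeAlgebra.induction with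
  | grade0 r => simpa using h0 r
  | grade1 x => exact h1 x
  | mul a b iha ihb => rw [map_mul]; exact hm _ _ iha ihb
  | add a b iha ihb => rw [map_add]; exact ha _ _ iha ihb

theorem weyl_central {B : Type} [CommRing B] {d : ℕ} (w : WeylAlgebra B d)
    (h : ∀ v, weylGen B d v * w = w * weylGen B d v) : w ∈ Subalgebra.center B _ := by
  rw [Subalgebra.mem_center_iff]
  intro u
  induction u using weyl_induction with
  | h0 r => exact Algebra.commutes r w
  | h1 v => exact h v
  | hm a b iha ihb => rw [mul_assoc, ihb, ← mul_assoc, iha, mul_assoc]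
  | ha a b iha ihb => rw [add_mul, mul_add, iha, ihb]

open MvPolynomial in
/-- The normal ordering map. -/
theorem exists_normal (B : Type) [CommRing B] (d : ℕ) :
    ∃ ψ : MvPolynomial (Fin d ⊕ Fin d) B →ₗ[B] WeylAlgebra B d,
      (∀ b, ψ (C b) = algebraMap B _ b) ∧
      (∀ f i, ψ (f * X (Sum.inl i)) = weylGen B d (Sum.inl i) * ψ f) ∧
      (∀ f j, ψ (f * X (Sum.inr j)) = ψ f * weylGen B d (Sum.inr j)) := by
  obtain ⟨F, hF⟩ := exists_aeval_of_comm (B := B) (A := Module.End B (WeylAlgebra B d))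
    (σ := Fin d ⊕ Fin d)
    (Sum.elim (fun i => LinearMap.mulLeft B (weylGen B d (Sum.inl i)))
      (fun j => LinearMap.mulRight B (weylGen B d (Sum.inr j)))) (by
    rintro (i | i) (j | j) <;> ext w <;> simp only [Sum.elim_inl, Sum.elim_inr,
      Module.End.mul_apply, LinearMap.mulLeft_apply, LinearMap.mulRight_apply]
    · rw [← mul_assoc, ← mul_assoc, weyl_xx]
    · rw [mul_assoc]
    · rw [mul_assoc]
    · rw [mul_assoc, mul_assoc, weyl_yy])
  refine ⟨(LinearMap.applyₗ (1 : WeylAlgebra B d)).comp F.toLinearMap, ?_, ?_, ?_⟩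
  · intro b
    have : F (C b) = algebraMap B _ b := F.commutes b
    simp [this, Algebra.algebraMap_eq_smul_one]
  · intro f i
    rw [mul_comm]
    simp [hF]
  · intro f i
    rw [mul_comm]
    simp [hF]

section
open MvPolynomial

variable {B : Type} [CommRing B] {d : ℕ}
  {ψ : MvPolynomial (Fin d ⊕ Fin d) B →ₗ[B] WeylAlgebra B d}

theorem normal_pderiv_x (h0 : ∀ b, ψ (C b) = algebraMap B _ b)
    (h1 : ∀ f i, ψ (f * X (Sum.inl i)) = weylGen B d (Sum.inl i) * ψ f)
    (h2 : ∀ f j, ψ (f * X (Sum.inr j)) = ψ f * weylGen B d (Sum.inr j))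
    (j : Fin d) (f) :
    weylGen B d (Sum.inr j) * ψ f
      = ψ f * weylGen B d (Sum.inr j) + ψ (pderiv (Sum.inl j) f) := by
  induction f using MvPolynomial.induction_on with
  | C a => simp [h0, Algebra.commutes]
  | add f g hf hg => rw [map_add, map_add, map_add, mul_add, add_mul, hf, hg]; abel
  | mul_X f v hf =>
    rw [pderiv_mul, pderiv_X]
    rcases v with i | i
    · rw [map_add, h1, h1, ← mul_assoc, weyl_yx, add_mul, mul_assoc, hf, mul_add, mul_assoc]
      by_cases hij : i = j
      · subst hij; simp; abel
      · simp [hij]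
    · rw [map_add, h2, h2, ← mul_assoc, hf, add_mul, mul_assoc, weyl_yy]
      simp [mul_assoc]

theorem normal_pderiv_y (h0 : ∀ b, ψ (C b) = algebraMap B _ b)
    (h1 : ∀ f i, ψ (f * X (Sum.inl i)) = weylGen B d (Sum.inl i) * ψ f)
    (h2 : ∀ f j, ψ (f * X (Sum.inr j)) = ψ f * weylGen B d (Sum.inr j))
    (j : Fin d) (f) :
    ψ f * weylGen B d (Sum.inl j)
      = weylGen B d (Sum.inl j) * ψ f + ψ (pderiv (Sum.inr j) f) := by
  induction f using MvPolynomial.induction_on with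
  | C a => simp [h0, Algebra.commutes]
  | add f g hf hg => rw [map_add, map_add, map_add, mul_add, add_mul, hf, hg]; abel
  | mul_X f v hf =>
    rw [pderiv_mul, pderiv_X]
    rcases v with i | i
    · rw [map_add, h1, h1, mul_assoc, hf, mul_add, ← mul_assoc, ← mul_assoc, weyl_xx]
      simp
    · rw [map_add, h2, h2, mul_assoc, weyl_yx, mul_add, ← mul_assoc, hf, add_mul, mul_assoc]
      by_cases hij : j = i
      · subst hij; simp; abel
      · simp [hij, Ne.symm hij]

theorem exists_action (B : Type) [CommRing B] (d : ℕ) :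
    ∃ L : WeylAlgebra B d →ₐ[B] Module.End B (MvPolynomial (Fin d ⊕ Fin d) B),
      (∀ i f, L (weylGen B d (Sum.inl i)) f = f * X (Sum.inl i)) ∧
      (∀ j f, L (weylGen B d (Sum.inr j)) f = f * X (Sum.inr j) + pderiv (Sum.inl j) f) := by
  let g : Fin d ⊕ Fin d → Module.End B (MvPolynomial (Fin d ⊕ Fin d) B) :=
    Sum.elim (fun i => LinearMap.mulRight B (X (Sum.inl i)))
      (fun j => LinearMap.mulRight B (X (Sum.inr j)) + (pderiv (Sum.inl j)).toLinearMap)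
  have hx : ∀ i f, g (Sum.inl i) f = f * X (Sum.inl i) := fun i f => by simp [g]
  have hy : ∀ j f, g (Sum.inr j) f = f * X (Sum.inr j) + pderiv (Sum.inl j) f :=
    fun j f => by simp [g]
  have hcomm : ∀ (i j : Fin d) (f : MvPolynomial (Fin d ⊕ Fin d) B),
      pderiv (Sum.inl i) (pderiv (Sum.inl j) f) = pderiv (Sum.inl j) (pderiv (Sum.inl i) f) := by
    intro i j f
    have : ⁅(pderiv (Sum.inl i) : Derivation B (MvPolynomial (Fin d ⊕ Fin d) B)
          (MvPolynomial (Fin d ⊕ Fin d) B)),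
        (pderiv (Sum.inl j) : Derivation B (MvPolynomial (Fin d ⊕ Fin d) B)
          (MvPolynomial (Fin d ⊕ Fin d) B))⁆ = 0 := by
      apply MvPolynomial.derivation_ext
      intro v
      rw [Derivation.commutator_apply, pderiv_X, pderiv_X]
      simp only [Pi.single_apply]
      split_ifs <;> simp
    have h := congrArg (fun D => D f) this
    simpa [Derivation.commutator_apply, sub_eq_zero] using h
  refine ⟨RingQuot.liftAlgHom B ⟨FreeAlgebra.lift B g, ?_⟩, ?_, ?_⟩
  · rintro _ _ (⟨i, j⟩ | ⟨i, j⟩ | ⟨i, j⟩)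
    · apply LinearMap.ext
      intro f
      simp only [map_mul, FreeAlgebra.lift_ι_apply, Module.End.mul_apply, hx]
      ring
    · apply LinearMap.ext
      intro f
      simp only [map_mul, FreeAlgebra.lift_ι_apply, Module.End.mul_apply, hy, map_add,
        pderiv_mul, hcomm i j]
      simp
      ring
    · apply LinearMap.ext
      intro f
      simp only [map_mul, FreeAlgebra.lift_ι_apply, Module.End.mul_apply, hx, hy, map_add,
        pderiv_mul, LinearMap.add_apply, pderiv_X]
      by_cases hij : i = j
      · subst hij; simp; ring
      · simp [hij]; ring
  · intro i f
    rw [weylGen, RingQuot.liftAlgHom_mkAlgHom_apply, FreeAlgebra.lift_ι_apply, hx]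
  · intro i f
    rw [weylGen, RingQuot.liftAlgHom_mkAlgHom_apply, FreeAlgebra.lift_ι_apply, hy]

theorem normal_bijective (h0 : ∀ b, ψ (C b) = algebraMap B _ b)
    (h1 : ∀ f i, ψ (f * X (Sum.inl i)) = weylGen B d (Sum.inl i) * ψ f)
    (h2 : ∀ f j, ψ (f * X (Sum.inr j)) = ψ f * weylGen B d (Sum.inr j)) :
    Function.Bijective ψ := by
  obtain ⟨L, hx, hy⟩ := exists_action B d
  have hc : ∀ w j f, L w (f * X (Sum.inr j)) = L w f * X (Sum.inr j) := by
    intro w j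
    induction w using weyl_induction with
    | h0 r => intro f; simp [AlgHom.commutes, Module.algebraMap_end_apply]
    | h1 v =>
      intro f
      rcases v with i | i
      · rw [hx, hx]; ring
      · rw [hy, hy, pderiv_mul, pderiv_X]; simp; ring
    | hm a b iha ihb => intro f; rw [map_mul L, Module.End.mul_apply, ihb, iha, Module.End.mul_apply]
    | ha a b iha ihb => intro f; rw [map_add, LinearMap.add_apply, iha, ihb, LinearMap.add_apply,
        add_mul]
  have hleft : ∀ f, L (ψ f) 1 = f := by
    intro f
    induction f using MvPolynomial.induction_on with
    | C a => rw [h0, AlgHom.commutes, Module.algebraMap_end_apply, smul_eq_C_mul, mul_one]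
    | add f g hf hg => rw [map_add, map_add, LinearMap.add_apply, hf, hg]
    | mul_X f v hf =>
      rcases v with i | i
      · rw [h1, map_mul, Module.End.mul_apply, hf, hx]
      · rw [h2, map_mul, Module.End.mul_apply, hy, pderiv_one, add_zero, hc, hf]
  have hright : ∀ w f, ψ (L w f) = w * ψ f := by
    intro w
    induction w using weyl_induction with
    | h0 r => intro f; rw [AlgHom.commutes, Module.algebraMap_end_apply, map_smul,
        Algebra.smul_def]
    | h1 v =>
      intro f
      rcases v with i | i
      · rw [hx, h1]
      · rw [hy, map_add, h2, normal_pderiv_x h0 h1 h2]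
    | hm a b iha ihb => intro f; rw [map_mul, Module.End.mul_apply, iha, ihb, mul_assoc]
    | ha a b iha ihb => intro f; rw [map_add, LinearMap.add_apply, map_add, iha, ihb, add_mul]
  refine ⟨Function.LeftInverse.injective (g := fun w => L w 1) hleft, fun w => ⟨L w 1, ?_⟩⟩
  have : ψ 1 = 1 := by simpa using h0 1
  rw [hright, this, mul_one]

theorem mem_range_expand {p : ℕ} (hp : p.Prime) (hpB : (p : B) = 0) {σ : Type}
    (f : MvPolynomial σ B) (hf : ∀ v, pderiv v f = 0) : ∃ g, expand p g = f := by
  have key : ∀ m ∈ f.support, ∀ v, p ∣ m v := by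
    intro m hm v
    by_contra hv
    rw [mem_support_iff] at hm
    apply hm
    have hpos : m v ≠ 0 := fun h => hv (h ▸ dvd_zero p)
    have hle : Finsupp.single v 1 ≤ m := by
      rw [Finsupp.single_le_iff]; omega
    have h := congrArg (coeff (m - Finsupp.single v 1)) (hf v)
    rw [coeff_pderiv, tsub_add_cancel_of_le hle, coeff_zero] at h
    have e : (((m - Finsupp.single v 1 : σ →₀ ℕ) v : ℕ) : B) + 1 = (m v : B) := by
      rw [← Nat.cast_succ]
      congr 1
      simp
      omega
    rw [e] at h
    have hcop : IsCoprime (m v : ℤ) (p : ℤ) :=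
      Nat.isCoprime_iff_coprime.2 ((Nat.Prime.coprime_iff_not_dvd hp).2 hv).symm
    obtain ⟨a, b, hab⟩ := hcop
    have hab' := congrArg (Int.cast : ℤ → B) hab
    push_cast at hab'
    rw [hpB, mul_zero, add_zero] at hab'
    calc coeff m f = coeff m f * (a * (m v : B)) := by rw [hab', mul_one]
      _ = (coeff m f * (m v : B)) * a := by ring
      _ = 0 := by rw [h, zero_mul]
  refine ⟨∑ m ∈ f.support, monomial (m.mapRange (· / p) (Nat.zero_div p)) (coeff m f), ?_⟩
  rw [map_sum]
  conv_rhs => rw [f.as_sum]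
  refine Finset.sum_congr rfl fun m hm => ?_
  rw [expand_monomial]
  have e : p • m.mapRange (· / p) (Nat.zero_div p) = m := by
    ext v
    simp [Nat.mul_div_cancel' (key m hm v)]
  rw [e]

end

theorem center_of_weyl_algebra_is_polynomial_ring_on_p_th_powers
    (p : ℕ) (hp : p.Prime) (B : Type) [CommRing B] (hpB : (p : B) = 0) (d : ℕ) :
    ∃ f : MvPolynomial (Fin d ⊕ Fin d) B →ₐ[B] WeylAlgebra B d,
      (∀ v : Fin d ⊕ Fin d, f (MvPolynomial.X v) = weylGen B d v ^ p) ∧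
      Function.Injective f ∧
      f.range = Subalgebra.center B (WeylAlgebra B d) := by
  obtain ⟨ψ, h0, h1, h2⟩ := exists_normal B d
  have hbij := normal_bijective h0 h1 h2
  have hp1 : ∀ n f i, ψ (f * MvPolynomial.X (Sum.inl i) ^ n) = weylGen B d (Sum.inl i) ^ n * ψ f := by
    intro n
    induction n with
    | zero => simp
    | succ n ih => intro f i; rw [pow_succ, ← mul_assoc, h1, ih, ← mul_assoc, pow_succ']
  have hp2 : ∀ n f i, ψ (f * MvPolynomial.X (Sum.inr i) ^ n) = ψ f * weylGen B d (Sum.inr i) ^ n := by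
    intro n
    induction n with
    | zero => simp
    | succ n ih => intro f i; rw [pow_succ, ← mul_assoc, h2, ih, mul_assoc, pow_succ]
  have hone : ψ 1 = 1 := by simpa using h0 1
  have hX : ∀ v, ψ (MvPolynomial.X v ^ p) = weylGen B d v ^ p := by
    rintro (i | i)
    · simpa [hone] using hp1 p 1 i
    · simpa [hone] using hp2 p 1 i
  have hpP : (p : MvPolynomial (Fin d ⊕ Fin d) B) = 0 := by
    rw [← map_natCast (MvPolynomial.C), hpB, map_zero]
  have hcen : ∀ v, weylGen B d v ^ p ∈ Subalgebra.center B (WeylAlgebra B d) := by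
    intro v
    rw [← hX]
    apply weyl_central
    rintro (i | i)
    · rw [normal_pderiv_y h0 h1 h2, MvPolynomial.pderiv_pow, hpP]
      simp
    · rw [normal_pderiv_x h0 h1 h2, MvPolynomial.pderiv_pow, hpP]
      simp
  let F : MvPolynomial (Fin d ⊕ Fin d) B →ₐ[B] WeylAlgebra B d :=
    (Subalgebra.center B (WeylAlgebra B d)).val.comp
      (MvPolynomial.aeval (fun v => ⟨weylGen B d v ^ p, hcen v⟩))
  have hFX : ∀ v, F (MvPolynomial.X v) = weylGen B d v ^ p := fun v => by simp [F]
  have hF : ∀ f, F f = ψ (MvPolynomial.expand p f) := by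
    intro f
    induction f using MvPolynomial.induction_on with
    | C a => rw [MvPolynomial.expand_C, h0]; exact F.commutes a
    | add f g hf hg => rw [map_add, map_add, map_add, hf, hg]
    | mul_X f v hf =>
      rw [map_mul, map_mul, MvPolynomial.expand_X, hFX, hf]
      rcases v with i | i
      · rw [hp1]
        exact (Subalgebra.mem_center_iff.1 (hcen (Sum.inl i)) _)
      · rw [hp2]
  refine ⟨F, hFX, ?_, ?_⟩
  · intro f g hfg
    rw [hF, hF] at hfg
    exact MvPolynomial.expand_injective hp.pos (hbij.1 hfg)
  · apply le_antisymm
    · rintro _ ⟨f, rfl⟩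
      exact (MvPolynomial.aeval (fun v => (⟨weylGen B d v ^ p, hcen v⟩ :
        Subalgebra.center B (WeylAlgebra B d))) f).2
    · intro w hw
      rw [Subalgebra.mem_center_iff] at hw
      obtain ⟨f, rfl⟩ := hbij.2 w
      obtain ⟨g, rfl⟩ := mem_range_expand hp hpB f (by
        rintro (j | j)
        · apply hbij.1
          have := normal_pderiv_x h0 h1 h2 j f
          rw [hw] at this
          rw [map_zero]
          exact left_eq_add.1 this
        · apply hbij.1
          have := normal_pderiv_y h0 h1 h2 j f
          rw [hw] at this
          rw [map_zero]
          exact left_eq_add.1 this)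
      exact ⟨g, hF g⟩
end
end

section
/- Let p be an odd prime, n ≥ 1, and let R be a commutative local ring with p·R = 0 and a distinguished element h ∈ R such that R is h-separable. Then every R-algebra automorphism φ of the Rees reduced Weyl algebra A(R) satisfying φ(a) ≡ a (mod h·A(R)) for all a ∈ A(R) is inner: there exists a unit u ∈ A(R)^× with φ(m) = u m u^{-1} for all m ∈ A(R). -/
noncomputable section

/-- The defining relations of the Rees reduced Weyl algebra `A(R)` (with parameter `h ∈ R`):
the `x_i` (indexed by `Sum.inl i`) commute, the `y_j` (indexed by `Sum.inr j`) commute,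
`y_j x_i = x_i y_j + δ_{ij}·h`, and `x_i^p = y_j^p = 0`. -/
inductive ReesWeylRel (p n : ℕ) (R : Type) [CommRing R] (h : R) :
    FreeAlgebra R (Fin n ⊕ Fin n) → FreeAlgebra R (Fin n ⊕ Fin n) → Prop
  | xx (i j : Fin n) :
      ReesWeylRel p n R h (FreeAlgebra.ι R (Sum.inl i) * FreeAlgebra.ι R (Sum.inl j))
        (FreeAlgebra.ι R (Sum.inl j) * FreeAlgebra.ι R (Sum.inl i))
  | yy (i j : Fin n) :
      ReesWeylRel p n R h (FreeAlgebra.ι R (Sum.inr i) * FreeAlgebra.ι R (Sum.inr j))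
        (FreeAlgebra.ι R (Sum.inr j) * FreeAlgebra.ι R (Sum.inr i))
  | yx (i j : Fin n) :
      ReesWeylRel p n R h (FreeAlgebra.ι R (Sum.inr j) * FreeAlgebra.ι R (Sum.inl i))
        (FreeAlgebra.ι R (Sum.inl i) * FreeAlgebra.ι R (Sum.inr j) +
          if i = j then algebraMap R (FreeAlgebra R (Fin n ⊕ Fin n)) h else 0)
  | xp (i : Fin n) : ReesWeylRel p n R h (FreeAlgebra.ι R (Sum.inl i) ^ p) 0
  | yp (j : Fin n) : ReesWeylRel p n R h (FreeAlgebra.ι R (Sum.inr j) ^ p) 0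

/-- The Rees reduced Weyl algebra `A(R)` on `2n` generators with parameter `h ∈ R`. -/
abbrev ReesWeyl (p n : ℕ) (R : Type) [CommRing R] (h : R) : Type :=
  RingQuot (ReesWeylRel p n R h)

/-- The generator `x_i` of the Rees reduced Weyl algebra. -/
def reesX (p n : ℕ) (R : Type) [CommRing R] (h : R) (i : Fin n) : ReesWeyl p n R h :=
  RingQuot.mkAlgHom R (ReesWeylRel p n R h) (FreeAlgebra.ι R (Sum.inl i))

/-- The generator `y_j` of the Rees reduced Weyl algebra. -/
def reesY (p n : ℕ) (R : Type) [CommRing R] (h : R) (j : Fin n) : ReesWeyl p n R h :=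
  RingQuot.mkAlgHom R (ReesWeylRel p n R h) (FreeAlgebra.ι R (Sum.inr j))


section RingLemmas
variable {R : Type*} [CommRing R] {E : Type*} [Ring E] [Algebra R E]

def taylorP (c : ℕ → R) (p : ℕ) (D Z : E) : E := ∑ k ∈ Finset.range p, c k • (Z ^ k * D ^ k)

lemma D_mul_Z_pow {D Z : E} (hDZ : D * Z = Z * D + 1) (k : ℕ) :
    D * Z ^ (k+1) = Z ^ (k+1) * D + ((k+1 : ℕ) : R) • Z ^ k := by
  induction k with
  | zero => simp [hDZ]
  | succ k ih =>
    rw [pow_succ Z (k+1), ← mul_assoc, ih, add_mul, mul_assoc, hDZ, mul_add, mul_one, smul_mul_assoc,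
      ← pow_succ, ← mul_assoc, ← pow_succ, add_assoc]
    congr 1
    push_cast
    module

lemma D_pow_mul_Z {D Z : E} (hDZ : D * Z = Z * D + 1) (k : ℕ) :
    D ^ (k+1) * Z = Z * D ^ (k+1) + ((k+1 : ℕ) : R) • D ^ k := by
  induction k with
  | zero => simp [hDZ]
  | succ k ih =>
    rw [pow_succ' D (k+1), mul_assoc, ih, mul_add, ← mul_assoc, hDZ, add_mul, one_mul, mul_smul_comm,
      ← pow_succ', mul_assoc, ← pow_succ', add_assoc]
    congr 1
    push_cast
    module

lemma D_mul_taylorP {c : ℕ → R} {p : ℕ} (hp : 1 ≤ p) (hc : ∀ k, k + 1 < p → ((k+1 : ℕ) : R) * c (k+1) = - c k)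
    {D Z : E} (hDZ : D * Z = Z * D + 1) (hD : D ^ p = 0) : D * taylorP c p D Z = 0 := by
  have key : ∀ m, m + 1 ≤ p → D * taylorP c (m+1) D Z = c m • (Z ^ m * D ^ (m+1)) := by
    intro m
    induction m with
    | zero => intro _; simp [taylorP]
    | succ m ih =>
      intro hm
      have ih := ih (by omega)
      unfold taylorP at ih ⊢
      rw [Finset.sum_range_succ, mul_add, ih, mul_smul_comm, ← mul_assoc, D_mul_Z_pow (R := R) hDZ,
        add_mul, smul_add, smul_mul_assoc, smul_smul, mul_comm (c (m+1)), hc m (by omega), neg_smul,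
        mul_assoc, ← pow_succ']
      abel
  obtain ⟨m, rfl⟩ : ∃ m, p = m + 1 := ⟨p - 1, by omega⟩
  rw [key m le_rfl, hD]; simp

lemma taylorP_mul_Z {c : ℕ → R} {p : ℕ} (hp : 1 ≤ p) (hc : ∀ k, k + 1 < p → ((k+1 : ℕ) : R) * c (k+1) = - c k)
    {D Z : E} (hDZ : D * Z = Z * D + 1) (hD : Z ^ p = 0) : taylorP c p D Z * Z = 0 := by
  have key : ∀ m, m + 1 ≤ p → taylorP c (m+1) D Z * Z = c m • (Z ^ (m+1) * D ^ m) := by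
    intro m
    induction m with
    | zero => intro _; simp [taylorP]
    | succ m ih =>
      intro hm
      have ih := ih (by omega)
      unfold taylorP at ih ⊢
      rw [Finset.sum_range_succ, add_mul, ih, smul_mul_assoc, mul_assoc, D_pow_mul_Z (R := R) hDZ,
        mul_add, smul_add, mul_smul_comm, smul_smul, mul_comm (c (m+1)), hc m (by omega), neg_smul,
        ← mul_assoc, ← pow_succ]
      abel
  obtain ⟨m, rfl⟩ : ∃ m, p = m + 1 := ⟨p - 1, by omega⟩
  rw [key m le_rfl, hD]; simp

lemma taylorP_eq_left {c : ℕ → R} (h0 : c 0 = 1) {p : ℕ} (hp : 1 ≤ p) (D Z : E) :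
    ∃ W : E, taylorP c p D Z = 1 + Z * W := by
  obtain ⟨m, rfl⟩ : ∃ m, p = m + 1 := ⟨p - 1, by omega⟩
  refine ⟨∑ k ∈ Finset.range m, c (k+1) • (Z ^ k * D ^ (k+1)), ?_⟩
  rw [taylorP, Finset.sum_range_succ', Finset.mul_sum]
  simp [h0, add_comm, pow_succ' Z, mul_assoc]

lemma taylorP_eq_right {c : ℕ → R} (h0 : c 0 = 1) {p : ℕ} (hp : 1 ≤ p) (D Z : E) :
    ∃ W : E, taylorP c p D Z = 1 + W * D := by
  obtain ⟨m, rfl⟩ : ∃ m, p = m + 1 := ⟨p - 1, by omega⟩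
  refine ⟨∑ k ∈ Finset.range m, c (k+1) • (Z ^ (k+1) * D ^ k), ?_⟩
  rw [taylorP, Finset.sum_range_succ', Finset.sum_mul]
  simp [h0, add_comm, pow_succ D, mul_assoc]

lemma taylorP_commute {c : ℕ → R} {p : ℕ} {D Z D' : E} (h1 : Commute D' D) (h2 : Commute D' Z) :
    Commute D' (taylorP c p D Z) := by
  refine Commute.sum_right _ _ _ fun k _ => ?_
  exact ((h2.pow_right k).mul_right (h1.pow_right k)).smul_right (c k)

lemma D_mul_list_prod {ι : Type*} {c : ℕ → R} {p : ℕ} (hp : 1 ≤ p)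
    (hc : ∀ k, k + 1 < p → ((k+1 : ℕ) : R) * c (k+1) = - c k)
    {D Z : ι → E} (hDD : ∀ s t, Commute (D s) (D t)) (hD : ∀ s, D s ^ p = 0)
    (hDZ : ∀ s, D s * Z s = Z s * D s + 1) (hDZ' : ∀ s t, s ≠ t → Commute (D s) (Z t))
    (l : List ι) (t : ι) (ht : t ∈ l) :
    D t * (l.map fun s => taylorP c p (D s) (Z s)).prod = 0 := by
  induction l with
  | nil => simp at ht
  | cons s l ih =>
    rw [List.map_cons, List.prod_cons, ← mul_assoc]
    by_cases h : t = s
    · subst h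
      rw [D_mul_taylorP hp hc (hDZ t) (hD t), zero_mul]
    · have : t ∈ l := by simpa [h] using ht
      rw [(taylorP_commute (hDD t s) (hDZ' t s h)).eq, mul_assoc, ih this, mul_zero]

lemma exists_coeffs (p : ℕ) (hp : p.Prime) (hpR : (p : R) = 0) :
    ∃ c : ℕ → R, c 0 = 1 ∧ ∀ k, k + 1 < p → ((k+1 : ℕ) : R) * c (k+1) = - c k := by
  have : ∀ k : ℕ, ∃ b : R, k + 1 < p → ((k+1 : ℕ) : R) * b = 1 := by
    intro k
    by_cases hk : k + 1 < p
    · have h1 : Nat.Coprime (k+1) p :=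
        (Nat.coprime_of_lt_prime (by omega) hk hp).symm
      obtain ⟨a, b, hab⟩ := (Nat.isCoprime_iff_coprime.mpr h1)
      refine ⟨(a : R), fun _ => ?_⟩
      have := congrArg (Int.cast : ℤ → R) hab
      push_cast at this ⊢
      rw [hpR] at this
      linear_combination this
    · exact ⟨0, fun h => absurd h hk⟩
  choose b hb using this
  refine ⟨fun k => Nat.rec 1 (fun k c => - (b k * c)) k, rfl, fun k hk => ?_⟩
  have := hb k hk
  simp only
  linear_combination (-(Nat.rec 1 (fun k c => - (b k * c)) k : R)) * this

end RingLemmas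

structure WeylData {R A ι : Type} [CommRing R] [Ring A] [Algebra R A] [DecidableEq ι]
    (p : ℕ) (h : R) (z z' : ι → A) : Prop where
  hp : p.Prime
  hpR : (p : R) = 0
  tf : ∀ a : A, h • a = 0 → a = 0
  cross_comm : ∀ s t, z s * z' t = z' t * z s + if s = t then algebraMap R A h else 0
  zp : ∀ s, z s ^ p = 0
  dual_pow : ∀ s, z' s ^ p = 0
  gen : Algebra.adjoin R (Set.range z) = ⊤
  gen' : Algebra.adjoin R (Set.range z') = ⊤
  zz : ∀ s t, ∃ r : R, z s * z t - z t * z s = algebraMap R A (h * r)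
  dual_comm : ∀ s t, ∃ r : R, z' s * z' t - z' t * z' s = algebraMap R A r

namespace WeylData
variable {R A ι : Type} [CommRing R] [Ring A] [Algebra R A] [DecidableEq ι]
    {p : ℕ} {h : R} {z z' : ι → A} (W : WeylData p h z z')
include W

lemma comm_mod (a b : A) : ∃ c : A, a * b - b * a = h • c := by
  have ha : a ∈ Algebra.adjoin R (Set.range z) := by rw [W.gen]; trivial
  have hb : b ∈ Algebra.adjoin R (Set.range z) := by rw [W.gen]; trivial
  induction ha, hb using Algebra.adjoin_induction₂ with
  | mem_mem x y hx hy =>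
    obtain ⟨s, rfl⟩ := hx
    obtain ⟨t, rfl⟩ := hy
    obtain ⟨r, hr⟩ := W.zz s t
    exact ⟨algebraMap R A r, by rw [hr, map_mul, Algebra.smul_def]⟩
  | algebraMap_both r s => exact ⟨0, by rw [Algebra.commutes, sub_self, smul_zero]⟩
  | algebraMap_left r x hx => exact ⟨0, by simp [Algebra.commutes]⟩
  | algebraMap_right r x hx => exact ⟨0, by simp [Algebra.commutes]⟩
  | add_left x y w _ _ _ h1 h2 =>
    obtain ⟨c, hc⟩ := h1
    obtain ⟨d, hd⟩ := h2
    refine ⟨c + d, ?_⟩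
    rw [smul_add, ← hc, ← hd]; noncomm_ring
  | add_right x y w _ _ _ h1 h2 =>
    obtain ⟨c, hc⟩ := h1
    obtain ⟨d, hd⟩ := h2
    refine ⟨c + d, ?_⟩
    rw [smul_add, ← hc, ← hd]; noncomm_ring
  | mul_left x y w _ _ _ h1 h2 =>
    obtain ⟨c, hc⟩ := h1
    obtain ⟨d, hd⟩ := h2
    refine ⟨c * y + x * d, ?_⟩
    rw [smul_add, ← smul_mul_assoc, ← mul_smul_comm, ← hc, ← hd]; noncomm_ring
  | mul_right x y w _ _ _ h1 h2 =>
    obtain ⟨c, hc⟩ := h1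
    obtain ⟨d, hd⟩ := h2
    refine ⟨c * w + y * d, ?_⟩
    rw [smul_add, ← smul_mul_assoc, ← mul_smul_comm, ← hc, ← hd]; noncomm_ring

lemma inj {a b : A} (hab : h • a = h • b) : a = b := by
  have := W.tf (a - b) (by rw [smul_sub, hab, sub_self])
  exact sub_eq_zero.mp this

lemma exists_div (f : A →ₗ[R] A) (hf : ∀ u, ∃ c, f u = h • c) :
    ∃ D : Module.End R A, ∀ u, h • D u = f u := by
  choose g hg using hf
  refine ⟨⟨⟨g, fun a b => W.inj ?_⟩, fun r a => W.inj ?_⟩, fun u => (hg u).symm⟩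
  · rw [← hg, map_add, smul_add, ← hg, ← hg]
  · simp only [RingHom.id_apply]
    rw [← hg, map_smul, smul_comm, ← hg]

omit W in
/-- The connection operators attached to `φ`. -/
def IsConn (h : R) (z : ι → A) (φ : A ≃ₐ[R] A) (D : ι → Module.End R A) : Prop :=
  ∀ s u, h • D s u = φ (z s) * u - u * z s

lemma exists_conn (φ : A ≃ₐ[R] A) (hφ : ∀ a, ∃ c, φ a - a = algebraMap R A h * c) :
    ∃ D : ι → Module.End R A, IsConn h z φ D := by
  have : ∀ s, ∃ D : Module.End R A, ∀ u, h • D u = φ (z s) * u - u * z s := by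
    intro s
    refine W.exists_div (LinearMap.mulLeft R (φ (z s)) - LinearMap.mulRight R (z s)) fun u => ?_
    obtain ⟨c, hc⟩ := hφ (z s)
    obtain ⟨d, hd⟩ := W.comm_mod (z s) u
    refine ⟨c * u + d, ?_⟩
    rw [smul_add, ← hd, ← smul_mul_assoc, Algebra.smul_def, ← hc]
    simp only [LinearMap.sub_apply, LinearMap.mulLeft_apply, LinearMap.mulRight_apply]
    noncomm_ring
  choose D hD using this
  exact ⟨D, hD⟩

section conn
variable {φ : A ≃ₐ[R] A} {D : ι → Module.End R A} (hD : IsConn h z φ D)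
include hD

lemma conn_comm (s t : ι) : Commute (D s) (D t) := by
  refine LinearMap.ext fun u => W.inj (W.inj ?_)
  simp only [Module.End.mul_apply]
  have key : ∀ s t u, h • h • D s (D t u) =
      φ (z s) * (φ (z t) * u - u * z t) - (φ (z t) * u - u * z t) * z s := by
    intro s t u
    rw [hD, smul_sub, ← mul_smul_comm, ← smul_mul_assoc, hD]
  rw [key, key]
  obtain ⟨r, hr⟩ := W.zz s t
  have h1 : φ (z s) * φ (z t) - φ (z t) * φ (z s) = algebraMap R A (h * r) := by
    rw [← map_mul, ← map_mul, ← map_sub, hr, AlgEquiv.commutes]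
  have h2 := Algebra.commutes (h * r) u
  rw [← sub_eq_zero]
  have : φ (z s) * (φ (z t) * u - u * z t) - (φ (z t) * u - u * z t) * z s -
    (φ (z t) * (φ (z s) * u - u * z s) - (φ (z s) * u - u * z s) * z t)
     = (φ (z s) * φ (z t) - φ (z t) * φ (z s)) * u - u * (z s * z t - z t * z s) := by noncomm_ring
  rw [this, h1, hr, h2, sub_self]

omit hD in
lemma smul_pow_inj (k : ℕ) {a : A} (hab : h ^ k • a = 0) : a = 0 := by
  induction k with
  | zero => simpa using hab
  | succ k ih =>
    rw [pow_succ, mul_comm, mul_smul] at hab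
    exact ih (W.tf _ hab)

lemma conn_pow (s : ι) : D s ^ p = 0 := by
  have h1 : h • D s = LinearMap.mulLeft R (φ (z s)) + LinearMap.mulRight R (-z s) := by
    ext u; simp [hD s u, sub_eq_add_neg]
  have h2 : Commute (LinearMap.mulLeft R (φ (z s))) (LinearMap.mulRight R (-z s)) := by
    refine LinearMap.ext fun u => ?_
    simp [mul_assoc]
  have hz : (-z s) ^ p = 0 := by rw [neg_pow, W.zp, mul_zero]
  have h3 : (h • D s) ^ p = 0 := by
    rw [h1, h2.add_pow_prime_eq W.hp, LinearMap.pow_mulLeft, LinearMap.pow_mulRight, ← map_pow,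
      W.zp, hz, map_zero]
    have : ((p : ℕ) : Module.End R A) = 0 := by
      have := map_natCast (algebraMap R (Module.End R A)) p
      rw [← this, W.hpR, map_zero]
    rw [this]
    ext; simp
  refine LinearMap.ext fun u => W.smul_pow_inj p ?_
  rw [smul_pow] at h3
  exact congrArg (fun f : Module.End R A => f u) h3

lemma conn_Z (s t : ι) : D s * LinearMap.mulRight R (z' t) =
    LinearMap.mulRight R (z' t) * D s + if s = t then 1 else 0 := by
  refine LinearMap.ext fun u => W.inj ?_
  simp only [Module.End.mul_apply, LinearMap.add_apply, LinearMap.mulRight_apply, smul_add]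
  rw [hD, ← smul_mul_assoc, hD]
  have := W.cross_comm s t
  by_cases hst : s = t
  · simp only [hst, if_true] at this ⊢
    rw [sub_mul, mul_assoc u (z t), this]
    simp only [Module.End.one_apply, Algebra.smul_def]
    rw [Algebra.commutes]
    noncomm_ring
  · simp only [hst, if_false, add_zero] at this ⊢
    simp only [LinearMap.zero_apply, smul_zero, add_zero]
    rw [sub_mul, mul_assoc u (z s), this]
    noncomm_ring

lemma conn_intertwine {v : A} (hv : ∀ s, D s v = 0) (m : A) : φ m * v = v * m := by
  have hm : m ∈ Algebra.adjoin R (Set.range z) := by rw [W.gen]; trivial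
  induction hm using Algebra.adjoin_induction with
  | mem x hx =>
    obtain ⟨s, rfl⟩ := hx
    have := hD s v
    rw [hv, smul_zero] at this
    exact (sub_eq_zero.mp this.symm)
  | algebraMap r => simp [Algebra.commutes]
  | add x y _ _ h1 h2 => rw [map_add, add_mul, mul_add, h1, h2]
  | mul x y _ _ h1 h2 => rw [map_mul, mul_assoc, h2, ← mul_assoc, h1, mul_assoc]

end conn
end WeylData

section LocalLemmas
variable {R A : Type} [CommRing R] [IsLocalRing R] [Ring A] [Algebra R A]

abbrev mTop (R A : Type) [CommRing R] [IsLocalRing R] [Ring A] [Algebra R A] : Submodule R A :=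
  (IsLocalRing.maximalIdeal R) • (⊤ : Submodule R A)

lemma map_mTop (f : A →ₗ[R] A) {a : A} (ha : a ∈ mTop R A) : f a ∈ mTop R A := by
  have h1 : f a ∈ (mTop R A).map f := Submodule.mem_map_of_mem ha
  rw [mTop, Submodule.map_smul''] at h1
  exact Submodule.smul_mono le_rfl le_top h1

lemma mul_left_mTop (b : A) {a : A} (ha : a ∈ mTop R A) : b * a ∈ mTop R A :=
  map_mTop (LinearMap.mulLeft R b) ha

lemma mul_right_mTop (b : A) {a : A} (ha : a ∈ mTop R A) : a * b ∈ mTop R A :=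
  map_mTop (LinearMap.mulRight R b) ha

lemma exists_quot (R A : Type) [CommRing R] [IsLocalRing R] [Ring A] [Algebra R A] :
    ∃ (B : Type) (_ : Ring B) (π : A →+* B), Function.Surjective π ∧ ∀ a, π a = 0 ↔ a ∈ mTop R A := by
  let I : Ideal A :=
    { carrier := mTop R A
      add_mem' := fun ha hb => (mTop R A).add_mem ha hb
      zero_mem' := (mTop R A).zero_mem
      smul_mem' := fun c x hx => mul_left_mTop c hx }
  have : I.IsTwoSided := ⟨fun b ha => mul_right_mTop b ha⟩
  exact ⟨A ⧸ I, inferInstance, Ideal.Quotient.mk I, Ideal.Quotient.mk_surjective, fun a =>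
    Ideal.Quotient.eq_zero_iff_mem⟩

lemma isUnit_of_mod [Module.Finite R A] {v w : A} (hvw : v * w - 1 ∈ mTop R A) : IsUnit v := by
  have hsurj : Function.Surjective (LinearMap.mulLeft R v) := by
    rw [← LinearMap.range_eq_top, eq_top_iff]
    refine Submodule.le_of_le_smul_of_le_jacobson_bot (I := IsLocalRing.maximalIdeal R)
      Module.Finite.fg_top (IsLocalRing.maximalIdeal_le_jacobson _) ?_
    intro a _
    have : a = v * (w * a) - (v * w - 1) * a := by noncomm_ring
    rw [this]
    refine Submodule.sub_mem _ (Submodule.mem_sup_left ⟨w * a, rfl⟩)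
      (Submodule.mem_sup_right (mul_right_mTop a hvw))
  obtain ⟨b, hb⟩ := hsurj 1
  have hinj : Function.Injective (LinearMap.mulLeft R v) :=
    OrzechProperty.injective_of_surjective_endomorphism _ hsurj
  have hb : v * b = 1 := hb
  have hb' : b * v = 1 := by
    apply hinj
    simp only [LinearMap.mulLeft_apply]
    rw [← mul_assoc, hb, one_mul, mul_one]
  exact ⟨⟨v, b, hb, hb'⟩, rfl⟩

lemma one_notMem_mTop [Module.Finite R A] [Nontrivial A] : (1 : A) ∉ mTop R A := by
  intro h
  have : (0 : A) * 0 - 1 ∈ mTop R A := by simpa using h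
  have := isUnit_of_mod this
  simp at this

/-- commuting nilpotent operators have a common kernel vector, modulo `m`. -/
lemma exists_common_kernel {ι : Type} {p : ℕ} (D : ι → Module.End R A)
    (hDD : ∀ s t, Commute (D s) (D t)) (hD : ∀ s, D s ^ p = 0)
    (K : Set A) (hK : ∀ s, ∀ a ∈ K, D s a ∈ K) (w : A) (hw : w ∈ K) (hwM : w ∉ mTop R A) (l : List ι) :
    ∃ w ∈ K, w ∉ mTop R A ∧ ∀ s ∈ l, D s w ∈ mTop R A := by
  classical
  induction l with
  | nil => exact ⟨w, hw, hwM, by simp⟩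
  | cons s l ih =>
    obtain ⟨u, hu, huM, hul⟩ := ih
    have hex : ∃ k, (D s ^ k) u ∈ mTop R A := ⟨p, by rw [hD]; simp⟩
    obtain ⟨k, hk⟩ : ∃ k, Nat.find hex = k + 1 := by
      refine Nat.exists_eq_succ_of_ne_zero fun h0 => ?_
      have := Nat.find_spec hex
      rw [h0] at this
      exact huM (by simpa using this)
    have hKpow : ∀ k, (D s ^ k) u ∈ K := by
      intro k
      induction k with
      | zero => simpa using hu
      | succ k ih => rw [pow_succ', Module.End.mul_apply]; exact hK _ _ ih
    refine ⟨(D s ^ k) u, hKpow k, Nat.find_min hex (by omega), ?_⟩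
    intro t ht
    rcases List.mem_cons.mp ht with rfl | ht
    · rw [← Module.End.mul_apply, ← pow_succ', ← hk]
      exact Nat.find_spec hex
    · rw [← Module.End.mul_apply, ((hDD t s).pow_right k).eq, Module.End.mul_apply]
      exact map_mTop _ (hul t ht)

lemma list_prod_mod {ι : Type} {p : ℕ} (hp : 1 ≤ p) {c : ℕ → R} (h0 : c 0 = 1)
    (D Z : ι → Module.End R A) (w : A) (l : List ι)
    (hw : ∀ s, D s w ∈ mTop R A) :
    (l.map fun s => taylorP c p (D s) (Z s)).prod w - w ∈ mTop R A := by
  induction l with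
  | nil => simp
  | cons s l ih =>
    rw [List.map_cons, List.prod_cons, Module.End.mul_apply]
    obtain ⟨W, hW⟩ := taylorP_eq_right h0 hp (D s) (Z s)
    set u := (l.map fun s => taylorP c p (D s) (Z s)).prod w
    have hu : D s u ∈ mTop R A := by
      have := (mTop R A).add_mem (map_mTop (D s) ih) (hw s)
      simpa using this
    rw [hW, LinearMap.add_apply, Module.End.mul_apply, Module.End.one_apply, add_sub_right_comm]
    exact (mTop R A).add_mem ih (map_mTop _ hu)

end LocalLemmas

namespace WeylData
variable {R A ι : Type} [CommRing R] [Ring A] [Algebra R A] [DecidableEq ι]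
    {p : ℕ} {h : R} {z z' : ι → A} (W : WeylData p h z z')
include W

lemma horizontal {φ : A ≃ₐ[R] A} {D : ι → Module.End R A} (hD : IsConn h z φ D)
    {c : ℕ → R} (hc : ∀ k, k + 1 < p → ((k+1 : ℕ) : R) * c (k+1) = - c k)
    (l : List ι) (t : ι) (ht : t ∈ l) (w : A) :
    D t ((l.map fun s => taylorP c p (D s) (LinearMap.mulRight R (z' s) : Module.End R A)).prod w) = 0 := by
  have := D_mul_list_prod (Z := fun s => (LinearMap.mulRight R (z' s) : Module.End R A))
    W.hp.one_le hc (W.conn_comm hD) (W.conn_pow hD) (fun s => by simpa using W.conn_Z hD s s)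
    (fun s t hst => show _ = _ by simpa [hst] using W.conn_Z hD s t) l t ht
  exact congrArg (fun f : Module.End R A => f w) this

variable [IsLocalRing R] [Module.Finite R A] [Fintype ι]

lemma case_nonunit (hh : ¬ IsUnit h) {φ : A ≃ₐ[R] A} {D : ι → Module.End R A} (hD : IsConn h z φ D) :
    ∃ v : A, IsUnit v ∧ ∀ s, D s v = 0 := by
  obtain ⟨c, hc0, hc⟩ := exists_coeffs (R := R) p W.hp W.hpR
  refine ⟨_, ?_, fun s => W.horizontal hD hc Finset.univ.toList s (by simp) 1⟩
  obtain ⟨B, _, π, hπs, hπ⟩ := exists_quot R A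
  have hcomm : ∀ a b : B, Commute a b := by
    intro a b
    obtain ⟨a, rfl⟩ := hπs a
    obtain ⟨b, rfl⟩ := hπs b
    obtain ⟨d, hd⟩ := W.comm_mod a b
    have : a * b - b * a ∈ mTop R A := by
      rw [hd]
      exact Submodule.smul_mem_smul ((IsLocalRing.mem_maximalIdeal h).mpr hh) trivial
    have := (hπ _).mpr this
    rw [map_sub, map_mul, map_mul] at this
    exact sub_eq_zero.mp this
  have key : ∀ l : List ι, IsNilpotent (π ((l.map fun s => taylorP c p (D s)
      (LinearMap.mulRight R (z' s) : Module.End R A)).prod 1) - 1) := by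
    intro l
    induction l with
    | nil => simp
    | cons s l ih =>
      rw [List.map_cons, List.prod_cons, Module.End.mul_apply]
      obtain ⟨W', hW⟩ := taylorP_eq_left hc0 W.hp.one_le (D s) (LinearMap.mulRight R (z' s) : Module.End R A)
      rw [hW, LinearMap.add_apply, Module.End.mul_apply, Module.End.one_apply, LinearMap.mulRight_apply,
        map_add, map_mul, add_sub_right_comm]
      refine (hcomm _ _).isNilpotent_add ih ?_
      refine (hcomm _ _).isNilpotent_mul_left ⟨p, ?_⟩
      rw [← map_pow, W.dual_pow, map_zero]
  have hu := (key Finset.univ.toList).isUnit_add_one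
  rw [sub_add_cancel] at hu
  obtain ⟨b, hb⟩ := hu.exists_right_inv
  obtain ⟨b, rfl⟩ := hπs b
  refine isUnit_of_mod (w := b) ((hπ _).mp ?_)
  rw [map_sub, map_mul, hb, map_one, sub_self]

omit [Fintype ι] [Module.Finite R A] in
/-- Elements central modulo `m` are scalars modulo `m`. -/
lemma center {D : ι → Module.End R A} (hD : IsConn h z AlgEquiv.refl D) (T : Finset ι) :
    ∀ w ∈ Algebra.adjoin R (z' '' T), (∀ s, D s w ∈ mTop R A) →
      ∃ r : R, w - algebraMap R A r ∈ mTop R A := by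
  obtain ⟨c, hc0, hc⟩ := exists_coeffs (R := R) p W.hp W.hpR
  induction T using Finset.induction_on with
  | empty =>
    intro w hw _
    simp only [Finset.coe_empty, Set.image_empty, Algebra.adjoin_empty] at hw
    obtain ⟨r, rfl⟩ := Algebra.mem_bot.mp hw
    exact ⟨r, by simp⟩
  | insert s T hs ih =>
    intro w hw hwD
    -- the derivation `[z' s, ·]` preserves the subalgebra
    have hder : ∀ a ∈ Algebra.adjoin R (z' '' (T : Set ι)),
        z' s * a - a * z' s ∈ Algebra.adjoin R (z' '' (T : Set ι)) := by
      intro a ha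
      induction ha using Algebra.adjoin_induction with
      | mem x hx =>
        obtain ⟨t, _, rfl⟩ := hx
        obtain ⟨r, hr⟩ := W.dual_comm s t
        rw [hr]; exact Subalgebra.algebraMap_mem _ r
      | algebraMap r => rw [Algebra.commutes, sub_self]; exact Subalgebra.zero_mem _
      | add x y _ _ h1 h2 =>
        have := Subalgebra.add_mem _ h1 h2
        convert this using 1; noncomm_ring
      | mul x y hx hy h1 h2 =>
        have := Subalgebra.add_mem _ (Subalgebra.mul_mem _ h1 hy) (Subalgebra.mul_mem _ hx h2)
        convert this using 1; noncomm_ring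
    -- decomposition `B_{T ∪ s} ⊆ B_T + A z'_s`, stable under left multiplication
    let N : Set A := {a | ∃ a₀ ∈ Algebra.adjoin R (z' '' (T : Set ι)), ∃ u, a = a₀ + u * z' s}
    have hNadd : ∀ a ∈ N, ∀ b ∈ N, a + b ∈ N := by
      rintro _ ⟨a, ha, u, rfl⟩ _ ⟨b, hb, v, rfl⟩
      exact ⟨a + b, Subalgebra.add_mem _ ha hb, u + v, by noncomm_ring⟩
    have hmul : ∀ b ∈ Algebra.adjoin R (z' '' ((insert s T : Finset ι) : Set ι)), ∀ a ∈ N, b * a ∈ N := by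
      intro b hb
      induction hb using Algebra.adjoin_induction with
      | mem x hx =>
        obtain ⟨t, ht, rfl⟩ := hx
        rintro _ ⟨a, ha, u, rfl⟩
        rcases Finset.mem_insert.mp ht with rfl | ht
        · exact ⟨_, hder a ha, a + z' t * u, by noncomm_ring⟩
        · exact ⟨z' t * a, Subalgebra.mul_mem _ (Algebra.subset_adjoin ⟨t, ht, rfl⟩) ha, z' t * u,
            by noncomm_ring⟩
      | algebraMap r =>
        rintro _ ⟨a, ha, u, rfl⟩
        exact ⟨_, Subalgebra.mul_mem _ (Subalgebra.algebraMap_mem _ r) ha, algebraMap R A r * u,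
          by noncomm_ring⟩
      | add x y _ _ h1 h2 => intro a ha; rw [add_mul]; exact hNadd _ (h1 a ha) _ (h2 a ha)
      | mul x y _ _ h1 h2 => intro a ha; rw [mul_assoc]; exact h1 _ (h2 a ha)
    obtain ⟨w₁, hw₁, u, hwu⟩ : w ∈ N := by
      have := hmul w hw 1 ⟨1, Subalgebra.one_mem _, 0, by simp⟩
      rwa [mul_one] at this
    have hDw₁ : D s w₁ = 0 := by
      apply W.tf
      rw [hD]
      rw [AlgEquiv.coe_refl, id]
      clear hwu
      induction hw₁ using Algebra.adjoin_induction with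
      | mem x hx =>
        obtain ⟨t, ht, rfl⟩ := hx
        have hst : s ≠ t := by rintro rfl; exact hs ht
        rw [W.cross_comm s t, if_neg hst, add_zero, sub_self]
      | algebraMap r => rw [Algebra.commutes, sub_self]
      | add x y _ _ h1 h2 => rw [mul_add, add_mul, add_sub_add_comm, h1, h2, add_zero]
      | mul x y _ _ h1 h2 =>
        have : z s * (x * y) - x * y * z s = (z s * x - x * z s) * y + x * (z s * y - y * z s) := by
          noncomm_ring
        rw [this, h1, h2]; simp
    set Z : Module.End R A := LinearMap.mulRight R (z' s) with hZ
    have hP1 : taylorP c p (D s) Z w₁ = w₁ := by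
      obtain ⟨W', hW⟩ := taylorP_eq_right hc0 W.hp.one_le (D s) Z
      rw [hW, LinearMap.add_apply, Module.End.mul_apply, hDw₁]; simp
    have hP2 : taylorP c p (D s) Z (u * z' s) = 0 := by
      have := taylorP_mul_Z W.hp.one_le hc (by simpa using W.conn_Z hD s s : D s * Z = Z * D s + 1)
        (by rw [hZ, LinearMap.pow_mulRight, W.dual_pow]; ext; simp)
      exact congrArg (fun f : Module.End R A => f u) this
    have hww : w - w₁ ∈ mTop R A := by
      have h1 : taylorP c p (D s) Z w = w₁ := by rw [hwu, map_add, hP1, hP2, add_zero]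
      obtain ⟨W', hW⟩ := taylorP_eq_right hc0 W.hp.one_le (D s) Z
      rw [hW, LinearMap.add_apply, Module.End.mul_apply, Module.End.one_apply] at h1
      have : w - w₁ = - W' (D s w) := by rw [← h1]; abel
      rw [this]
      exact (mTop R A).neg_mem (map_mTop _ (hwD s))
    obtain ⟨r, hr⟩ := ih w₁ hw₁ (fun t => by
      have := (mTop R A).sub_mem (hwD t) (map_mTop (D t) hww)
      simpa using this)
    exact ⟨r, by have := (mTop R A).add_mem hww hr; simpa using this⟩

lemma case_unit [Nontrivial A] (hh : IsUnit h) {φ : A ≃ₐ[R] A} {D : ι → Module.End R A}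
    (hD : IsConn h z φ D) : ∃ v : A, IsUnit v ∧ ∀ s, D s v = 0 := by
  obtain ⟨c, hc0, hc⟩ := exists_coeffs (R := R) p W.hp W.hpR
  obtain ⟨w, -, hwM, hwD⟩ := exists_common_kernel D (W.conn_comm hD) (W.conn_pow hD) Set.univ
    (by simp) 1 trivial one_notMem_mTop Finset.univ.toList
  have hv := fun s => W.horizontal hD hc Finset.univ.toList s (by simp) w
  have hvM := list_prod_mod W.hp.one_le hc0 D
    (fun s => (LinearMap.mulRight R (z' s) : Module.End R A)) w Finset.univ.toList
    (fun s => hwD s (by simp))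
  set v := (Finset.univ.toList.map fun s =>
    taylorP c p (D s) (LinearMap.mulRight R (z' s) : Module.End R A)).prod w
  refine ⟨v, ?_, hv⟩
  have hvM' : v ∉ mTop R A := fun hv' => hwM (by
    have := (mTop R A).sub_mem hv' hvM
    simpa using this)
  have hintw := W.conn_intertwine hD hv
  obtain ⟨D', hD'⟩ := W.exists_conn AlgEquiv.refl (fun a => ⟨0, by simp⟩)
  obtain ⟨g, hg⟩ := hh.exists_left_inv
  let K : Set A := {a | ∃ b, a - v * b ∈ mTop R A}
  obtain ⟨w', ⟨b, hb⟩, hw'M, hw'D⟩ := exists_common_kernel D' (W.conn_comm hD') (W.conn_pow hD') K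
    (by
      rintro s a ⟨b, hb⟩
      have h1 : D' s a = g • (z s * a - a * z s) := by
        have := hD' s a
        rw [AlgEquiv.coe_refl, id] at this
        rw [← this, smul_smul, hg, one_smul]
      refine ⟨g • (φ.symm (z s) * b - b * z s), ?_⟩
      have h2 := hintw (φ.symm (z s))
      rw [AlgEquiv.apply_symm_apply] at h2
      have h3 : D' s a - v * g • (φ.symm (z s) * b - b * z s)
          = g • (z s * (a - v * b) - (a - v * b) * z s) := by
        rw [h1, mul_smul_comm, ← smul_sub, mul_sub v, ← mul_assoc v (φ.symm _), ← h2]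
        congr 1
        noncomm_ring
      rw [h3]
      exact Submodule.smul_mem _ _ (Submodule.sub_mem _ (mul_left_mTop _ hb) (mul_right_mTop _ hb)))
    v ⟨1, by simp⟩ hvM' Finset.univ.toList
  obtain ⟨r, hr⟩ := W.center hD' Finset.univ w' (by simp [W.gen']) (fun s => hw'D s (by simp))
  have hru : IsUnit r := by
    by_contra hru
    have : algebraMap R A r ∈ mTop R A := by
      rw [Algebra.algebraMap_eq_smul_one]
      exact Submodule.smul_mem_smul ((IsLocalRing.mem_maximalIdeal r).mpr hru) trivial
    exact hw'M (by simpa using (mTop R A).add_mem hr this)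
  obtain ⟨r', hr'⟩ := hru.exists_left_inv
  refine isUnit_of_mod (R := R) (w := r' • b) ?_
  have : v * r' • b - 1 = r' • ((w' - algebraMap R A r) - (w' - v * b)) := by
    rw [sub_sub_sub_cancel_left, smul_sub, Algebra.algebraMap_eq_smul_one, smul_smul, hr', one_smul,
      mul_smul_comm]
  rw [this]
  exact Submodule.smul_mem _ _ (Submodule.sub_mem _ hr hb)

theorem inner [Nontrivial A] (φ : A ≃ₐ[R] A) (hφ : ∀ a, ∃ c, φ a - a = algebraMap R A h * c) :
    ∃ u : Aˣ, ∀ m : A, φ m = (u : A) * m * ((u⁻¹ : Aˣ) : A) := by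
  obtain ⟨D, hD⟩ := W.exists_conn φ hφ
  obtain ⟨v, ⟨u, rfl⟩, hv⟩ : ∃ v : A, IsUnit v ∧ ∀ s, D s v = 0 := by
    by_cases hh : IsUnit h
    · exact W.case_unit hh hD
    · exact W.case_nonunit hh hD
  refine ⟨u, fun m => ?_⟩
  rw [Units.eq_mul_inv_iff_mul_eq]
  exact W.conn_intertwine hD hv m

end WeylData

section PBW
open MvPolynomial

open scoped IsMulCommutative in
lemma exists_comm_aeval {R A ι : Type} [CommRing R] [Ring A] [Algebra R A] (z : ι → A)
    (hz : ∀ i j, z i * z j = z j * z i) :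
    ∃ F : MvPolynomial ι R →ₐ[R] A, ∀ i, F (X i) = z i := by
  have := Algebra.isMulCommutative_adjoin R (s := Set.range z) (by
    rintro _ ⟨i, rfl⟩ _ ⟨j, rfl⟩; exact hz i j)
  let G : MvPolynomial ι R →ₐ[R] Algebra.adjoin R (Set.range z) :=
    MvPolynomial.aeval fun i => ⟨z i, Algebra.subset_adjoin ⟨i, rfl⟩⟩
  refine ⟨(Algebra.adjoin R (Set.range z)).val.comp G, fun i => ?_⟩
  simp [G]

variable (p n : ℕ) (R : Type) [CommRing R] (h : R)

lemma rees_xx (i j : Fin n) : reesX p n R h i * reesX p n R h j = reesX p n R h j * reesX p n R h i := by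
  simpa [reesX] using RingQuot.mkAlgHom_rel R (ReesWeylRel.xx (p := p) (n := n) (h := h) i j)

lemma rees_yy (i j : Fin n) : reesY p n R h i * reesY p n R h j = reesY p n R h j * reesY p n R h i := by
  simpa [reesY] using RingQuot.mkAlgHom_rel R (ReesWeylRel.yy (p := p) (n := n) (h := h) i j)

lemma rees_yx (i j : Fin n) : reesY p n R h j * reesX p n R h i = reesX p n R h i * reesY p n R h j +
    if i = j then algebraMap R _ h else 0 := by
  have := RingQuot.mkAlgHom_rel R (ReesWeylRel.yx (p := p) (n := n) (h := h) i j)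
  rw [map_add, map_mul, map_mul] at this
  rw [reesX, reesY, this]
  split_ifs <;> simp

lemma rees_xp (i : Fin n) : reesX p n R h i ^ p = 0 := by
  simpa [reesX] using RingQuot.mkAlgHom_rel R (ReesWeylRel.xp (p := p) (n := n) (h := h) i)

lemma rees_yp (i : Fin n) : reesY p n R h i ^ p = 0 := by
  simpa [reesY] using RingQuot.mkAlgHom_rel R (ReesWeylRel.yp (p := p) (n := n) (h := h) i)

lemma rees_gen : Algebra.adjoin R (Set.range (Sum.elim (reesX p n R h) (reesY p n R h))) = ⊤ := by
  have h1 := FreeAlgebra.adjoin_range_ι R (Fin n ⊕ Fin n)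
  have h2 := congrArg (Subalgebra.map (RingQuot.mkAlgHom R (ReesWeylRel p n R h))) h1
  rw [AlgHom.map_adjoin, Algebra.map_top, (AlgHom.range_eq_top _).mpr
    (RingQuot.mkAlgHom_surjective R (ReesWeylRel p n R h)), ← Set.range_comp] at h2
  rw [← h2]
  congr 2
  funext s
  cases s <;> rfl

/-- The ideal generated by `p`-th powers of variables. -/
def powIdeal : Ideal (MvPolynomial (Fin n ⊕ Fin n) R) :=
  Ideal.span (Set.range fun s => X s ^ p)

abbrev QQ : Type := MvPolynomial (Fin n ⊕ Fin n) R ⧸ powIdeal p n R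

variable {p n R}

lemma mem_powIdeal (f : MvPolynomial (Fin n ⊕ Fin n) R) :
    f ∈ powIdeal p n R ↔ ∀ m ∈ f.support, ∃ s, p ≤ m s := by
  have : powIdeal p n R = Ideal.span ((fun s => monomial s (1 : R)) ''
      (Set.range fun s : Fin n ⊕ Fin n => Finsupp.single s p)) := by
    rw [powIdeal, ← Set.range_comp]
    congr 2
    funext s
    simp [X_pow_eq_monomial]
  rw [this, mem_ideal_span_monomial_image]
  refine forall₂_congr fun m _ => ?_
  constructor
  · rintro ⟨_, ⟨s, rfl⟩, hs⟩
    exact ⟨s, Finsupp.single_le_iff.mp hs⟩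
  · rintro ⟨s, hs⟩
    exact ⟨_, ⟨s, rfl⟩, Finsupp.single_le_iff.mpr hs⟩

lemma QQ_tf {h : R} (hnz : h ∈ nonZeroDivisors R) (q : QQ p n R) (hq : h • q = 0) : q = 0 := by
  obtain ⟨f, rfl⟩ := Ideal.Quotient.mk_surjective q
  have h1 : h • f ∈ powIdeal p n R := Ideal.Quotient.eq_zero_iff_mem.mp hq
  refine Ideal.Quotient.eq_zero_iff_mem.mpr ?_
  rw [mem_powIdeal] at h1 ⊢
  intro m hm
  refine h1 m ?_
  rw [mem_support_iff] at hm ⊢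
  rw [coeff_smul, smul_eq_mul]
  intro h0
  exact hm (hnz.1 _ h0)

lemma QQ_nontrivial (hp : p.Prime) [Nontrivial R] : (1 : QQ p n R) ≠ 0 := by
  intro h1
  have h1 : (1 : MvPolynomial (Fin n ⊕ Fin n) R) ∈ powIdeal p n R := Ideal.Quotient.eq_zero_iff_mem.mp h1
  rw [mem_powIdeal] at h1
  obtain ⟨s, hs⟩ := h1 0 (by simp [mem_support_iff])
  have := hp.pos
  simp at hs
  omega

lemma QQ_finite (hp : p.Prime) : Module.Finite R (QQ p n R) := by
  have hg : Algebra.adjoin R (Set.range fun s => Ideal.Quotient.mkₐ R (powIdeal p n R) (X s)) = ⊤ := by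
    have h2 := congrArg (Subalgebra.map (Ideal.Quotient.mkₐ R (powIdeal p n R)))
      (MvPolynomial.adjoin_range_X (R := R) (σ := Fin n ⊕ Fin n))
    rw [AlgHom.map_adjoin, Algebra.map_top, (AlgHom.range_eq_top _).mpr
      (Ideal.Quotient.mkₐ_surjective _ _), ← Set.range_comp] at h2
    exact h2
  have : (Algebra.adjoin R (Set.range fun s => Ideal.Quotient.mkₐ R (powIdeal p n R) (X s))).toSubmodule.FG := by
    refine fg_adjoin_of_finite (Set.finite_range _) ?_
    rintro _ ⟨s, rfl⟩
    refine IsIntegral.of_pow hp.pos ?_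
    have : (Ideal.Quotient.mkₐ R (powIdeal p n R) (X s)) ^ p = 0 := by
      rw [← map_pow]
      exact Ideal.Quotient.eq_zero_iff_mem.mpr (Ideal.subset_span ⟨s, rfl⟩)
    rw [this]
    exact isIntegral_zero
  rw [hg] at this
  exact ⟨by simpa using this⟩

lemma pderiv_mem (hpR : (p : R) = 0) (s : Fin n ⊕ Fin n) (f : MvPolynomial (Fin n ⊕ Fin n) R)
    (hf : f ∈ powIdeal p n R) : pderiv s f ∈ powIdeal p n R := by
  refine Submodule.span_induction ?_ ?_ ?_ ?_ hf
  · rintro _ ⟨t, rfl⟩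
    have : (p : MvPolynomial (Fin n ⊕ Fin n) R) = 0 := by
      rw [← map_natCast (C : R →+* MvPolynomial (Fin n ⊕ Fin n) R), hpR, map_zero]
    simp [Derivation.leibniz_pow, this]
  · simp
  · intro f g _ _ h1 h2; rw [map_add]; exact Ideal.add_mem _ h1 h2
  · intro a f hf h1
    rw [smul_eq_mul, Derivation.leibniz]
    exact Ideal.add_mem _ (Ideal.mul_mem_left _ _ h1) (Ideal.mul_mem_right _ _ hf)

def mulQ (s : Fin n ⊕ Fin n) : Module.End R (QQ p n R) :=
  LinearMap.mulLeft R (Ideal.Quotient.mkₐ R (powIdeal p n R) (X s))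

def derQ (hpR : (p : R) = 0) (s : Fin n ⊕ Fin n) : Module.End R (QQ p n R) :=
  Submodule.mapQ ((powIdeal p n R).restrictScalars R) ((powIdeal p n R).restrictScalars R)
    (pderiv s).toLinearMap (fun f hf => pderiv_mem hpR s f hf)

lemma mulQ_mk (s : Fin n ⊕ Fin n) (f) : mulQ s (Ideal.Quotient.mk (powIdeal p n R) f) =
    Ideal.Quotient.mk (powIdeal p n R) (X s * f) := rfl

lemma derQ_mk (hpR : (p : R) = 0) (s : Fin n ⊕ Fin n) (f) :
    derQ hpR s (Ideal.Quotient.mk (powIdeal p n R) f) =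
    Ideal.Quotient.mk (powIdeal p n R) (pderiv s f) := rfl

lemma endQ_ext {f g : Module.End R (QQ p n R)} (H : ∀ a, f (Ideal.Quotient.mk (powIdeal p n R) a) =
    g (Ideal.Quotient.mk (powIdeal p n R) a)) : f = g := by
  refine LinearMap.ext fun q => ?_
  obtain ⟨a, rfl⟩ := Ideal.Quotient.mk_surjective q
  exact H a

lemma mulQ_comm (s t : Fin n ⊕ Fin n) : mulQ (p := p) (R := R) s * mulQ t = mulQ t * mulQ s := by
  refine endQ_ext fun a => ?_
  simp only [Module.End.mul_apply, mulQ_mk]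
  congr 1; ring

lemma derQ_mulQ (hpR : (p : R) = 0) (s t : Fin n ⊕ Fin n) : derQ hpR s * mulQ t =
    mulQ t * derQ hpR s + if s = t then 1 else 0 := by
  refine endQ_ext fun a => ?_
  simp only [Module.End.mul_apply, mulQ_mk, derQ_mk, LinearMap.add_apply]
  rw [Derivation.leibniz, map_add, pderiv_X]
  by_cases hst : s = t
  · subst hst; simp
  · simp [hst, Pi.single_apply, Ne.symm hst]

lemma mulQ_pow (s : Fin n ⊕ Fin n) : mulQ (p := p) (R := R) s ^ p = 0 := by
  have key : ∀ k a, (mulQ (p := p) (R := R) s ^ k) (Ideal.Quotient.mk (powIdeal p n R) a) =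
      Ideal.Quotient.mk (powIdeal p n R) (X s ^ k * a) := by
    intro k
    induction k with
    | zero => intro a; simp
    | succ k ih => intro a; rw [pow_succ, Module.End.mul_apply, mulQ_mk, ih, pow_succ, mul_assoc]
  refine endQ_ext fun a => ?_
  rw [key]
  exact Ideal.Quotient.eq_zero_iff_mem.mpr
    (Ideal.mul_mem_right _ _ (Ideal.subset_span ⟨s, rfl⟩))

lemma derQ_comm (hpR : (p : R) = 0) (s t : Fin n ⊕ Fin n) :
    derQ hpR s * derQ hpR t = derQ hpR t * derQ hpR s := by
  refine endQ_ext fun a => ?_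
  simp only [Module.End.mul_apply, derQ_mk]
  congr 1
  have h1 : ⁅pderiv (R := R) s, pderiv (R := R) t⁆ = (0 : Derivation R (MvPolynomial (Fin n ⊕ Fin n) R) (MvPolynomial (Fin n ⊕ Fin n) R)) := by
    apply MvPolynomial.derivation_ext
    intro i
    rw [Derivation.commutator_apply]
    simp [pderiv_X, Pi.single_apply, apply_ite]
  have := congrArg (fun d => d a) h1
  simp only [Derivation.commutator_apply, Derivation.zero_apply] at this
  exact sub_eq_zero.mp this

lemma derQ_pow (hp : p.Prime) (hpR : (p : R) = 0) (s : Fin n ⊕ Fin n) : derQ hpR s ^ p = 0 := by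
  have hcomm : ∀ t, derQ hpR s ^ p * mulQ t = mulQ t * derQ hpR s ^ p := by
    intro t
    by_cases hst : s = t
    · subst hst
      obtain ⟨m, hm⟩ : ∃ m, p = m + 1 := ⟨p - 1, by have := hp.pos; omega⟩
      have := D_pow_mul_Z (R := R) (by simpa using derQ_mulQ hpR s s) m
      rw [← hm, hpR, zero_smul, add_zero] at this
      exact this
    · have : Commute (derQ hpR s) (mulQ t) := show _ = _ by simpa [hst] using derQ_mulQ hpR s t
      exact (this.pow_left p).eq
  refine endQ_ext fun a => ?_
  induction a using MvPolynomial.induction_on with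
  | C r =>
    obtain ⟨m, hm⟩ : ∃ m, p = m + 1 := ⟨p - 1, by have := hp.pos; omega⟩
    have h0 : derQ hpR s (Ideal.Quotient.mk (powIdeal p n R) (C r)) = 0 := by
      rw [derQ_mk]; simp
    have : derQ hpR s ^ p = derQ hpR s ^ m * derQ hpR s := by rw [← pow_succ, ← hm]
    rw [this, Module.End.mul_apply, h0]; simp
  | add f g h1 h2 => rw [map_add, map_add, map_add, h1, h2]
  | mul_X f t h1 =>
    rw [mul_comm, ← mulQ_mk, ← Module.End.mul_apply, hcomm, Module.End.mul_apply, h1]; simp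

/-- action of the generators -/
def actQ (hpR : (p : R) = 0) (h : R) : Fin n ⊕ Fin n → Module.End R (QQ p n R) :=
  Sum.elim (fun i => mulQ (Sum.inl i)) (fun j => mulQ (Sum.inr j) + h • derQ hpR (Sum.inl j))

lemma exists_rho (hp : p.Prime) (hpR : (p : R) = 0) (h : R) :
    ∃ ρ : ReesWeyl p n R h →ₐ[R] Module.End R (QQ p n R),
      (∀ i, ρ (reesX p n R h i) = actQ hpR h (Sum.inl i)) ∧
      (∀ i, ρ (reesY p n R h i) = actQ hpR h (Sum.inr i)) := by
  refine ⟨RingQuot.liftAlgHom R ⟨FreeAlgebra.lift R (actQ hpR h), ?_⟩, ?_, ?_⟩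
  · intro a b hab
    cases hab with
    | xx i j => simp only [map_mul, FreeAlgebra.lift_ι_apply]; exact mulQ_comm _ _
    | yy i j =>
      simp only [map_mul, FreeAlgebra.lift_ι_apply, actQ, Sum.elim_inr]
      have h1 := mulQ_comm (p := p) (R := R) (n := n) (Sum.inr i) (Sum.inr j)
      have h2 := derQ_comm (p := p) (R := R) (n := n) hpR (Sum.inl i) (Sum.inl j)
      have h3 : ∀ i j, derQ (p := p) (R := R) (n := n) hpR (Sum.inl i) * mulQ (Sum.inr j) =
        mulQ (Sum.inr j) * derQ hpR (Sum.inl i) := fun i j => by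
          simpa using derQ_mulQ (p := p) (R := R) (n := n) hpR (Sum.inl i) (Sum.inr j)
      simp only [add_mul, mul_add, smul_mul_assoc, mul_smul_comm, h1, h2, h3, smul_add]
      abel
    | yx i j =>
      simp only [map_mul, map_add, FreeAlgebra.lift_ι_apply, actQ, Sum.elim_inr, Sum.elim_inl]
      have h1 := mulQ_comm (p := p) (R := R) (n := n) (Sum.inr j) (Sum.inl i)
      have h2 := derQ_mulQ (p := p) (R := R) (n := n) hpR (Sum.inl j) (Sum.inl i)
      simp only [add_mul, mul_add, smul_mul_assoc, mul_smul_comm, h1, h2]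
      by_cases hij : i = j
      · subst hij
        simp [Algebra.algebraMap_eq_smul_one, add_assoc]
      · simp [hij, Ne.symm hij]
    | xp i => simp only [map_pow, FreeAlgebra.lift_ι_apply, map_zero]; exact mulQ_pow _
    | yp i =>
      simp only [map_pow, FreeAlgebra.lift_ι_apply, map_zero, actQ, Sum.elim_inr]
      have h3 : Commute (mulQ (Sum.inr i)) (h • derQ (p := p) (R := R) (n := n) hpR (Sum.inl i)) := by
        refine Commute.smul_right ?_ h
        have := derQ_mulQ (p := p) (R := R) (n := n) hpR (Sum.inl i) (Sum.inr i)
        exact Eq.symm (by simpa using this)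
      have h4 : ((p : ℕ) : Module.End R (QQ p n R)) = 0 := by
        rw [← map_natCast (algebraMap R (Module.End R (QQ p n R))) p, hpR, map_zero]
      rw [h3.add_pow_prime_eq hp, mulQ_pow, smul_pow, derQ_pow hp, h4]
      simp
  · intro i; simp [reesX]
  · intro i; simp [reesY]

/-- the ordered-monomial map -/
lemma exists_sigma (hp : p.Prime) (hpR : (p : R) = 0) (h : R) :
    ∃ σ : QQ p n R →ₗ[R] ReesWeyl p n R h, σ 1 = 1 ∧
      (∀ i q, σ (actQ hpR h (Sum.inl i) q) = reesX p n R h i * σ q) ∧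
      (∀ i q, σ (actQ hpR h (Sum.inr i) q) = reesY p n R h i * σ q) := by
  obtain ⟨F, hF⟩ := exists_comm_aeval (R := R) _ (rees_xx p n R h)
  obtain ⟨G, hG⟩ := exists_comm_aeval (R := R) _ (rees_yy p n R h)
  let e := Finsupp.sumFinsuppAddEquivProdFinsupp (M := ℕ) (α := Fin n) (β := Fin n)
  let S : MvPolynomial (Fin n ⊕ Fin n) R →ₗ[R] ReesWeyl p n R h :=
    (basisMonomials (Fin n ⊕ Fin n) R).constr R
      fun m => F (monomial (e m).1 1) * G (monomial (e m).2 1)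
  have hS : ∀ m, S (monomial m 1) = F (monomial (e m).1 1) * G (monomial (e m).2 1) := by
    intro m
    have := (basisMonomials (Fin n ⊕ Fin n) R).constr_basis R
      (fun m => F (monomial (e m).1 1) * G (monomial (e m).2 1)) m
    simpa using this
  have hex : ∀ i, e (Finsupp.single (Sum.inl i) 1) = (Finsupp.single i 1, 0) := by
    intro i
    ext j <;> simp [e, Finsupp.single_apply]
  have hey : ∀ i, e (Finsupp.single (Sum.inr i) 1) = (0, Finsupp.single i 1) := by
    intro i
    ext j <;> simp [e, Finsupp.single_apply]
  have hext : ∀ f g : MvPolynomial (Fin n ⊕ Fin n) R →ₗ[R] ReesWeyl p n R h,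
      (∀ m, f (monomial m 1) = g (monomial m 1)) → f = g := by
    intro f g H
    refine (basisMonomials (Fin n ⊕ Fin n) R).ext fun m => ?_
    simpa using H m
  have hSx : ∀ i f, S (X (Sum.inl i) * f) = reesX p n R h i * S f := by
    intro i f
    have := hext (S ∘ₗ LinearMap.mulLeft R (X (Sum.inl i))) (LinearMap.mulLeft R (reesX p n R h i) ∘ₗ S) (by
      intro m
      simp only [LinearMap.comp_apply, LinearMap.mulLeft_apply]
      rw [X, monomial_mul, one_mul, hS, hS, map_add, hex, ← mul_assoc, ← hF, ← map_mul, X, monomial_mul]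
      simp)
    exact congrArg (fun k => k f) this
  have hSy : ∀ i f, S (X (Sum.inr i) * f) = S f * reesY p n R h i := by
    intro i f
    have := hext (S ∘ₗ LinearMap.mulLeft R (X (Sum.inr i))) (LinearMap.mulRight R (reesY p n R h i) ∘ₗ S) (by
      intro m
      simp only [LinearMap.comp_apply, LinearMap.mulLeft_apply, LinearMap.mulRight_apply]
      rw [X, monomial_mul, one_mul, hS, hS, map_add, hey, mul_assoc, ← hG, ← map_mul, X, monomial_mul]
      simp [add_comm])
    exact congrArg (fun k => k f) this
  have hyF : ∀ j f, reesY p n R h j * F f = F f * reesY p n R h j + h • F (pderiv j f) := by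
    intro j f
    induction f using MvPolynomial.induction_on with
    | C r =>
      have : F (C r) = algebraMap R _ r := F.commutes r
      rw [this, Algebra.commutes]; simp
    | add f g h1 h2 => simp only [map_add, mul_add, add_mul, h1, h2, smul_add]; abel
    | mul_X f i h1 =>
      rw [map_mul, ← mul_assoc, h1, add_mul, mul_assoc, hF, rees_yx, Derivation.leibniz, pderiv_X]
      by_cases hij : i = j
      · subst hij
        simp only [if_true, Pi.single_eq_same, smul_eq_mul, mul_one, map_add, map_mul, hF]
        have hc : F f * algebraMap R _ h = h • F f := by rw [← Algebra.commutes, Algebra.smul_def]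
        have : F (X i) * F (pderiv i f) = F (pderiv i f) * F (X i) := by
          rw [← map_mul, ← map_mul, mul_comm]
        rw [hF] at this
        rw [mul_add, hc, this, smul_mul_assoc, smul_add, mul_assoc, add_assoc]
      · rw [if_neg hij, Pi.single_eq_of_ne hij, add_zero, smul_zero, zero_add, smul_eq_mul, mul_comm (X i),
          map_mul, hF, smul_mul_assoc, mul_assoc]
  have hS' : ∀ m r, S (monomial m r) = F (monomial (e m).1 r) * G (monomial (e m).2 1) := by
    intro m r
    have h1 : ∀ (τ : Type) (m : τ →₀ ℕ), monomial m r = r • (monomial m (1 : R)) := by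
      intro τ m; rw [smul_monomial, smul_eq_mul, mul_one]
    rw [h1, h1, map_smul, map_smul, hS, smul_mul_assoc]
  have hsub : ∀ m j, e (m - Finsupp.single (Sum.inl j) 1) = ((e m).1 - Finsupp.single j 1, (e m).2) := by
    intro m j
    ext k <;> simp [e, Finsupp.single_apply]
  have hGy : ∀ j g, G g * reesY p n R h j = reesY p n R h j * G g := by
    intro j g
    rw [← hG, ← map_mul, ← map_mul, mul_comm]
  have hSyl : ∀ j f, S (X (Sum.inr j) * f + h • pderiv (Sum.inl j) f) = reesY p n R h j * S f := by
    intro j f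
    have := hext (S ∘ₗ (LinearMap.mulLeft R (X (Sum.inr j)) + h • (pderiv (Sum.inl j)).toLinearMap))
       (LinearMap.mulLeft R (reesY p n R h j) ∘ₗ S) (by
      intro m
      simp only [LinearMap.comp_apply, LinearMap.mulLeft_apply, LinearMap.add_apply, LinearMap.smul_apply,
        map_add, map_smul]
      rw [hSy, hS, ← mul_assoc, hyF, add_mul, smul_mul_assoc, mul_assoc, mul_assoc, hGy]
      congr 2
      rw [Derivation.coeFn_coe, pderiv_monomial, hS', pderiv_monomial, hsub]
      simp [e])
    exact congrArg (fun k => k f) this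
  have hker : ∀ f ∈ powIdeal p n R, S f = 0 := by
    have hpow1 : ∀ i k f, S (X (Sum.inl i) ^ k * f) = reesX p n R h i ^ k * S f := by
      intro i k
      induction k with
      | zero => simp
      | succ k ih => intro f; rw [pow_succ, mul_assoc, ih, hSx, pow_succ, mul_assoc]
    have hpow2 : ∀ i k f, S (X (Sum.inr i) ^ k * f) = S f * reesY p n R h i ^ k := by
      intro i k
      induction k with
      | zero => simp
      | succ k ih => intro f; rw [pow_succ, mul_assoc, ih, hSy, pow_succ', mul_assoc]
    intro f hf
    suffices H : ∀ a, S (a * f) = 0 by simpa using H 1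
    refine Submodule.span_induction (p := fun f _ => ∀ a, S (a * f) = 0) ?_ ?_ ?_ ?_ hf
    · rintro _ ⟨s, rfl⟩ a
      simp only
      rw [mul_comm]
      rcases s with i | i
      · rw [hpow1, rees_xp, zero_mul]
      · rw [hpow2, rees_yp, mul_zero]
    · simp
    · intro f g _ _ h1 h2 a; rw [mul_add, map_add, h1, h2, add_zero]
    · intro b f _ h1 a
      rw [smul_eq_mul, ← mul_assoc, h1]
  refine ⟨Submodule.liftQ ((powIdeal p n R).restrictScalars R) S (fun f hf => hker f hf), ?_, ?_, ?_⟩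
  · change S 1 = 1
    have := hS 0
    simpa using this
  · intro i q
    obtain ⟨f, rfl⟩ := Ideal.Quotient.mk_surjective q
    exact hSx i f
  · intro i q
    obtain ⟨f, rfl⟩ := Ideal.Quotient.mk_surjective q
    exact hSyl i f

lemma rees_retract (hp : p.Prime) (hpR : (p : R) = 0) (h : R) :
    ∃ (ev : ReesWeyl p n R h →ₗ[R] QQ p n R) (σ : QQ p n R →ₗ[R] ReesWeyl p n R h),
      ev 1 = 1 ∧ ∀ a, σ (ev a) = a := by
  obtain ⟨ρ, hρx, hρy⟩ := exists_rho (n := n) hp hpR h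
  obtain ⟨σ, hσ1, hσx, hσy⟩ := exists_sigma (n := n) hp hpR h
  refine ⟨LinearMap.applyₗ 1 ∘ₗ ρ.toLinearMap, σ, by simp, fun a => ?_⟩
  have key : ∀ q, σ (ρ a q) = a * σ q := by
    have ha : a ∈ Algebra.adjoin R (Set.range (Sum.elim (reesX p n R h) (reesY p n R h))) := by
      rw [rees_gen]; trivial
    induction ha using Algebra.adjoin_induction with
    | mem x hx =>
      obtain ⟨i | i, rfl⟩ := hx
      · intro q; rw [Sum.elim_inl, hρx, hσx]
      · intro q; rw [Sum.elim_inr, hρy, hσy]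
    | algebraMap r =>
      intro q
      rw [AlgHom.commutes, Module.algebraMap_end_apply, map_smul, Algebra.smul_def]
    | add x y _ _ h1 h2 => intro q; rw [map_add, LinearMap.add_apply, map_add, h1, h2, add_mul]
    | mul x y _ _ h1 h2 => intro q; rw [map_mul, Module.End.mul_apply, h1, h2, mul_assoc]
  have := key 1
  rw [hσ1, mul_one] at this
  exact this

end PBW

lemma weylData_of {p n : ℕ} {R A : Type} [CommRing R] [Ring A] [Algebra R A] {h : R}
    (hp : p.Prime) (hpR : (p : R) = 0) (x y : Fin n → A) (tf : ∀ a : A, h • a = 0 → a = 0)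
    (xx : ∀ i j, x i * x j = x j * x i) (yy : ∀ i j, y i * y j = y j * y i)
    (yx : ∀ i j, y j * x i = x i * y j + if i = j then algebraMap R A h else 0)
    (xp : ∀ i, x i ^ p = 0) (yp : ∀ i, y i ^ p = 0)
    (gen : Algebra.adjoin R (Set.range (Sum.elim x y)) = ⊤) :
    WeylData p h (Sum.elim x y) (Sum.elim (fun i => - y i) x) where
  hp := hp
  hpR := hpR
  tf := tf
  cross_comm := by
    rintro (i | i) (j | j)
    · simp only [Sum.elim_inl, Sum.inl.injEq, neg_mul, mul_neg]
      rw [yx]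
      split_ifs <;> abel
    · simpa using xx i j
    · simpa using yy i j
    · simp only [Sum.elim_inr, Sum.inr.injEq]
      rw [yx]
      simp only [eq_comm]
  zp := by
    rintro (i | i)
    · exact xp i
    · exact yp i
  dual_pow := by
    rintro (i | i)
    · rw [Sum.elim_inl, neg_pow, yp, mul_zero]
    · exact xp i
  gen := gen
  gen' := by
    rw [eq_top_iff, ← gen]
    refine Algebra.adjoin_le ?_
    rintro _ ⟨i | i, rfl⟩
    · exact Algebra.subset_adjoin ⟨Sum.inr i, rfl⟩
    · rw [Sum.elim_inr, ← neg_neg (y i)]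
      exact Subalgebra.neg_mem _ (Algebra.subset_adjoin ⟨Sum.inl i, rfl⟩)
  zz := by
    rintro (i | i) (j | j)
    · exact ⟨0, by simp [xx i j]⟩
    · refine ⟨if i = j then -1 else 0, ?_⟩
      simp only [Sum.elim_inl, Sum.elim_inr, yx]
      split_ifs <;> simp
    · refine ⟨if j = i then 1 else 0, ?_⟩
      simp only [Sum.elim_inl, Sum.elim_inr, yx]
      split_ifs <;> simp
    · exact ⟨0, by simp [yy i j]⟩
  dual_comm := by
    rintro (i | i) (j | j)
    · exact ⟨0, by simp [yy i j]⟩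
    · refine ⟨if j = i then -h else 0, ?_⟩
      simp only [Sum.elim_inl, Sum.elim_inr, neg_mul, mul_neg, yx]
      split_ifs <;> simp
    · refine ⟨if i = j then h else 0, ?_⟩
      simp only [Sum.elim_inl, Sum.elim_inr, neg_mul, mul_neg, yx]
      split_ifs <;> simp
    · exact ⟨0, by simp [xx i j]⟩


/-- over a local `h`-separable base `R` (with `p·R = 0`, `p` an odd prime),
every `R`-algebra automorphism of `A(R)` which is the identity modulo `h·A(R)` is inner. -/
theorem automorphism_trivial_mod_h_is_inner_local
    (p n : ℕ) (hp : p.Prime) (hodd : p ≠ 2) (hn : 1 ≤ n)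
    (R : Type) [CommRing R] [IsLocalRing R] (hpR : (p : R) = 0) (h : R)
    (hnz : h ∈ nonZeroDivisors R)
    (hsep : ∀ a : R, (∃ b : R, a ^ p = h * b) → ∃ c : R, a ^ p = h ^ p * c)
    (φ : ReesWeyl p n R h ≃ₐ[R] ReesWeyl p n R h)
    (hφ : ∀ a : ReesWeyl p n R h, ∃ c : ReesWeyl p n R h,
      φ a - a = algebraMap R (ReesWeyl p n R h) h * c) :
    ∃ u : (ReesWeyl p n R h)ˣ, ∀ m : ReesWeyl p n R h,
      φ m = (u : ReesWeyl p n R h) * m * ((u⁻¹ : (ReesWeyl p n R h)ˣ) : ReesWeyl p n R h) := by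
  obtain ⟨ev, σ, hev, hσ⟩ := rees_retract (n := n) hp hpR h
  have hfin : Module.Finite R (ReesWeyl p n R h) :=
    have := QQ_finite (n := n) (R := R) hp
    Module.Finite.of_surjective σ fun a => ⟨ev a, hσ a⟩
  have hnt : Nontrivial (ReesWeyl p n R h) := ⟨1, 0, fun h10 =>
    QQ_nontrivial (n := n) (R := R) hp (by rw [← hev, h10, map_zero])⟩
  have W := weylData_of hp hpR (reesX p n R h) (reesY p n R h)
    (fun a ha => by
      have h1 : ev a = 0 := QQ_tf hnz _ (by rw [← map_smul, ha, map_zero])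
      rw [← hσ a, h1, map_zero])
    (rees_xx p n R h) (rees_yy p n R h) (rees_yx p n R h) (rees_xp p n R h) (rees_yp p n R h)
    (rees_gen p n R h)
  exact W.inner φ hφ
end
end

section
/- Let A be an associative (not necessarily commutative) ring and h ∈ A a central nonzerodivisor such that the commutator of any two elements of A lies in hA. Then the quotient ring A/hA is commutative, and the bracket defined by {x̄, ȳ} := (the class modulo h of the unique c ∈ A with hc = xy − yx), for x, y ∈ A lifting x̄, ȳ ∈ A/hA, is well-defined, biadditive, and makes A/hA a Poisson ring: it is alternating, satisfies the Jacobi identity, and is a derivation in each argument with respect to the ring multiplication of A/hA. -/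
/-!
Statement 8: Let `A` be an associative ring and `h ∈ A` a central nonzerodivisor with
`[A,A] ⊆ hA`.  Then `A/hA` is commutative and the bracket `{x̄,ȳ}` (class mod `h` of the
unique `c` with `hc = xy − yx`) is well-defined, biadditive, alternating, satisfies the
Jacobi identity, and is a derivation in each argument — i.e. `A/hA` is a Poisson ring.
All clauses are phrased on `A`, modulo `h·A`.
-/

theorem quotient_is_poisson_ring
    (A : Type) [Ring A] (h : A)
    (hcentral : ∀ x : A, h * x = x * h)
    (hnzdl : ∀ x : A, h * x = 0 → x = 0)
    (hnzdr : ∀ x : A, x * h = 0 → x = 0)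
    (hcommutator : ∀ x y : A, ∃ c : A, x * y - y * x = h * c) :
    -- `A/hA` is commutative
    (∀ x y : A, ∃ c : A, x * y - y * x = h * c) ∧
    -- the bracket is well-defined: independent (mod `h`) of the choice of lifts
    (∀ a a' b b' c c' : A,
      (∃ u, a' - a = h * u) → (∃ v, b' - b = h * v) →
      a * b - b * a = h * c → a' * b' - b' * a' = h * c' →
      ∃ w, c' - c = h * w) ∧
    -- biadditive in the second argument
    (∀ a b b' c c' : A, a * b - b * a = h * c → a * b' - b' * a = h * c' →
      a * (b + b') - (b + b') * a = h * (c + c')) ∧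
    -- biadditive in the first argument
    (∀ a a' b c c' : A, a * b - b * a = h * c → a' * b - b * a' = h * c' →
      (a + a') * b - b * (a + a') = h * (c + c')) ∧
    -- alternating: `{a,a} = 0`
    (∀ a c : A, a * a - a * a = h * c → c = 0) ∧
    -- Jacobi identity: `{{a,b},c} + {{b,c},a} + {{c,a},b} = 0` in `A/hA`
    (∀ a b c ab bc ca x y z : A,
      a * b - b * a = h * ab → b * c - c * b = h * bc → c * a - a * c = h * ca →
      ab * c - c * ab = h * x → bc * a - a * bc = h * y → ca * b - b * ca = h * z →
      ∃ w, x + y + z = h * w) ∧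
    -- Leibniz rule: `{a, b·c} = {a,b}·c + b·{a,c}` in `A/hA`
    (∀ a b c u ab ac : A,
      a * (b * c) - (b * c) * a = h * u → a * b - b * a = h * ab → a * c - c * a = h * ac →
      ∃ w, u - (ab * c + b * ac) = h * w) := by
  have cancel : ∀ x y : A, h * x = h * y → x = y := by
    intro x y e
    have := hnzdl (x - y) (by rw [mul_sub, e, sub_self])
    exact sub_eq_zero.mp this
  have hl : ∀ x y : A, x * (h * y) = h * (x * y) := by
    intro x y
    rw [← mul_assoc, ← hcentral, mul_assoc]
  refine ⟨hcommutator, ?_, ?_, ?_, ?_, ?_, ?_⟩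
  · rintro a a' b b' c c' ⟨u, hu⟩ ⟨v, hv⟩ e e'
    obtain ⟨p, hp⟩ := hcommutator a v
    obtain ⟨q, hq⟩ := hcommutator u b
    refine ⟨p + q + (u * v - v * u), ?_⟩
    apply cancel
    have ha : a' = a + h * u := by rw [← hu]; abel
    have hb : b' = b + h * v := by rw [← hv]; abel
    rw [mul_sub, ← e, ← e', mul_add h (p + q), mul_add h p, ← hp, ← hq, ha, hb]
    simp only [mul_add, add_mul, mul_sub, mul_assoc, hl]
    abel
  · intro a b b' c c' e e'
    rw [mul_add h, ← e, ← e']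
    noncomm_ring
  · intro a a' b c c' e e'
    rw [mul_add h, ← e, ← e']
    noncomm_ring
  · intro a c e
    exact hnzdl c (by rw [← e, sub_self])
  · intro a b c ab bc ca x y z e1 e2 e3 e4 e5 e6
    refine ⟨0, ?_⟩
    apply cancel
    apply cancel
    have k : ∀ s t : A, h * (s * t - t * s) = (h * s) * t - t * (h * s) := by
      intro s t
      rw [mul_sub, mul_assoc, hl]
    rw [mul_add h (x + y), mul_add h x, ← e4, ← e5, ← e6, mul_add h, mul_add h, k, k, k, ← e1, ← e2, ← e3]
    simp only [mul_zero]
    noncomm_ring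
  · intro a b c u ab ac e1 e2 e3
    refine ⟨0, ?_⟩
    apply cancel
    rw [mul_sub, mul_add h, ← hl b ac, ← mul_assoc h ab, ← e1, ← e2, ← e3]
    simp only [mul_zero]
    noncomm_ring
end

section
/- Let p be an odd prime, n ≥ 1, and let R be a commutative ring with p·R = 0 and h ∈ R a nonzerodivisor. Let J ⊆ A(R) be the two-sided ideal of the Rees reduced Weyl algebra generated by x_1,…,x_n, y_1,…,y_n. Then every element a ∈ h·A(R) + J satisfies a^p ∈ h^{p−1}·A(R). -/
noncomputable section

theorem rw_id1 {B : Type*} [Ring B] (u a b : B) :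
    u * (a * b) - (a * b) * u = (u * a - a * u) * b + a * (u * b - b * u) := by
  noncomm_ring

theorem rw_id2 {B : Type*} [Ring B] (a b r s : B) :
    a * b - r * s = (a - r) * (b - s) + r * (b - s) + (a - r) * s := by
  noncomm_ring

open Polynomial in
theorem rw_derivative_pow {B : Type*} [Ring B] (z : B[X]) (m : ℕ) :
    derivative (z ^ m) = ∑ i ∈ Finset.range m, z ^ i * derivative z * z ^ (m - 1 - i) := by
  induction m with
  | zero => simp
  | succ m ih =>
    rw [pow_succ, derivative_mul, ih, Finset.sum_range_succ, Finset.sum_mul]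
    simp only [Nat.add_sub_cancel, Nat.sub_self, pow_zero, mul_one]
    congr 1
    refine Finset.sum_congr rfl fun i hi => ?_
    have hi' := Finset.mem_range.1 hi
    rw [mul_assoc _ _ z, ← pow_succ]
    congr 2
    omega

theorem rw_choose {B : Type*} [Ring B] (p : ℕ) (hp : p.Prime) (hB : (p : B) = 0) (m : ℕ)
    (hm : m < p) : (((p - 1).choose m : ℕ) : B) = (-1) ^ m := by
  induction m with
  | zero => simp
  | succ m ih =>
    have h1 := ih (by omega)
    have h2 : (p - 1).choose m + (p - 1).choose (m + 1) = p.choose (m + 1) := by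
      obtain ⟨q, rfl⟩ : ∃ q, p = q + 1 := ⟨p - 1, by omega⟩
      simp [Nat.choose_succ_succ]
    have h3 : ((p.choose (m + 1) : ℕ) : B) = 0 := by
      obtain ⟨k, hk⟩ := hp.dvd_choose_self (Nat.succ_ne_zero m) hm
      rw [hk]; push_cast; rw [hB, zero_mul]
    rw [← h2] at h3
    push_cast at h3
    rw [h1] at h3
    rw [pow_succ, mul_neg_one]
    exact (neg_eq_of_add_eq_zero_right h3).symm

theorem rw_sub_pow {B : Type*} [Ring B] (p : ℕ) (hp : p.Prime) (hodd : p ≠ 2)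
    (hB : (p : B) = 0) (x y : B) (hxy : Commute x y) :
    (x - y) ^ (p - 1) = ∑ i ∈ Finset.range p, x ^ i * y ^ (p - 1 - i) := by
  have hpos := hp.pos
  rw [sub_eq_add_neg, (hxy.neg_right).add_pow, Nat.sub_add_cancel hpos]
  refine Finset.sum_congr rfl fun i hi => ?_
  have hi' := Finset.mem_range.1 hi
  rw [rw_choose p hp hB i hi', neg_pow y, mul_assoc, mul_assoc, ← ((Commute.neg_one_left (y ^ (p - 1 - i))).pow_left i).eq,
    ← mul_assoc ((-1) ^ (p - 1 - i)), ← pow_add, Nat.sub_add_cancel (by omega),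
    (hp.even_sub_one hodd).neg_one_pow, one_mul]

/-- The `(p-1)`-fold commutator in characteristic `p`. -/
theorem rw_ad {B : Type*} [Ring B] (p : ℕ) (hp : p.Prime) (hodd : p ≠ 2)
    (hB : (p : B) = 0) (z u : B) :
    (fun w => z * w - w * z)^[p - 1] u = ∑ i ∈ Finset.range p, z ^ i * u * z ^ (p - 1 - i) := by
  have hE : (p : Module.End ℤ B) = 0 := by
    ext w
    rw [← nsmul_one]
    simp [nsmul_eq_mul, hB]
  have key := rw_sub_pow p hp hodd hE (LinearMap.mulLeft ℤ z) (LinearMap.mulRight ℤ z)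
    (LinearMap.ext fun w => (mul_assoc z w z).symm)
  have := congrArg (fun f : Module.End ℤ B => f u) key
  simp only [LinearMap.sum_apply, Module.End.mul_apply, LinearMap.pow_mulLeft,
    LinearMap.pow_mulRight, LinearMap.mulLeft_apply, LinearMap.mulRight_apply,
    Module.End.pow_apply, ← mul_assoc] at this
  rw [← this]
  rfl

open Polynomial in
theorem rw_add_pow {B : Type*} [Ring B] (p : ℕ) (hp : p.Prime) (hodd : p ≠ 2)
    (hB : (p : B) = 0) (h : B) (hc : ∀ b, Commute h b) (hcom : ∀ u v : B, h ∣ u * v - v * u)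
    (u v : B) : h ^ (p - 1) ∣ (u + v) ^ p - u ^ p - v ^ p := by
  set z : B[X] := C u * X + C v with hz
  have hBX : (p : B[X]) = 0 := by
    rw [← C_eq_natCast, hB, C_0]
  have hdz : derivative z = C u := by simp [hz]
  have hdeg : z.natDegree ≤ 1 := natDegree_linear_le
  have step : ∀ k (w : B[X]), ∀ i, h ^ k ∣ ((fun w => z * w - w * z)^[k] w).coeff i := by
    intro k w
    induction k with
    | zero => intro i; simp
    | succ k ih =>
      intro i
      rw [Function.iterate_succ_apply']
      set W := (fun w => z * w - w * z)^[k] w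
      have aux : ∀ (s : B) j, h ^ (k + 1) ∣ s * W.coeff j - W.coeff j * s := by
        intro s j
        obtain ⟨c, hc'⟩ := ih j
        obtain ⟨d, hd⟩ := hcom s c
        refine ⟨d, ?_⟩
        rw [hc', ← mul_assoc, ← ((hc s).pow_left k).eq, mul_assoc, mul_assoc, ← mul_sub, hd,
          pow_succ, mul_assoc]
      have e : z * W - W * z = (C u * W - W * C u) * X + (C v * W - W * C v) := by
        rw [hz, add_mul, mul_add, mul_assoc (C u) X W, X_mul, sub_mul, mul_assoc, mul_assoc]
        abel
      show _ ∣ (z * W - W * z).coeff i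
      rw [e, coeff_add]
      refine dvd_add ?_ ?_
      · cases i with
        | zero => simp
        | succ i => rw [coeff_mul_X, coeff_sub, coeff_C_mul, coeff_mul_C]; exact aux u i
      · rw [coeff_sub, coeff_C_mul, coeff_mul_C]; exact aux v i
  have hder : derivative (z ^ p) = (fun w => z * w - w * z)^[p - 1] (C u) := by
    rw [rw_ad p hp hodd hBX, rw_derivative_pow, hdz]
  have hmid : ∀ i, i + 1 < p → h ^ (p - 1) ∣ (z ^ p).coeff (i + 1) := by
    intro i hi
    have h1 := step (p - 1) (C u) i
    rw [← hder, coeff_derivative] at h1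
    have hcop : Nat.Coprime (i + 1) p :=
      Nat.Coprime.symm ((Nat.Prime.coprime_iff_not_dvd hp).2 (Nat.not_dvd_of_pos_of_lt (Nat.succ_pos i) hi))
    obtain ⟨m, -, hm⟩ := Nat.exists_mul_mod_eq_one_of_coprime hcop hp.one_lt
    have h2 : (((i + 1) * m : ℕ) : B) = 1 := by
      rw [← Nat.div_add_mod ((i + 1) * m) p, hm]
      push_cast
      rw [hB]; simp
    have h3 := h1.mul_right (m : B)
    rw [mul_assoc] at h3
    push_cast at h2
    rwa [h2, mul_one] at h3
  have hdegp : (z ^ p).natDegree < p + 1 := by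
    have := natDegree_pow_le_of_le p hdeg
    omega
  have hev : (u + v) ^ p = ∑ i ∈ Finset.range (p + 1), (z ^ p).coeff i := by
    have h1 : (z ^ p).eval 1 = ∑ i ∈ Finset.range (p + 1), (z ^ p).coeff i := by
      rw [eval_eq_sum_range' hdegp]; simp
    have h2 : (z ^ p).eval 1 = (u + v) ^ p := by
      have := map_pow (eval₂RingHom' (RingHom.id B) 1 (fun a => Commute.one_right a)) z p
      have hz1 : z.eval 1 = u + v := by simp [hz]
      change (z ^ p).eval 1 = (z.eval 1) ^ p at this
      rw [this, hz1]
    rw [← h1, h2]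
  have htop : (z ^ p).coeff p = u ^ p := by
    have := coeff_pow_of_natDegree_le (m := p) hdeg
    rw [mul_one] at this
    rw [this]; simp [hz]
  have hbot : (z ^ p).coeff 0 = v ^ p := by
    have := map_pow (constantCoeff (R := B)) z p
    simp only [constantCoeff_apply] at this
    rw [this]; simp [hz]
  have hrest : (u + v) ^ p - u ^ p - v ^ p
      = ∑ i ∈ Finset.range (p - 1), (z ^ p).coeff (i + 1) := by
    obtain ⟨q, hq⟩ : ∃ q, p = q + 1 := ⟨p - 1, by have := hp.pos; omega⟩
    rw [hev, Finset.sum_range_succ, htop]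
    rw [show Finset.range p = Finset.range (q + 1) by rw [← hq], Finset.sum_range_succ', hbot, show p - 1 = q by omega]
    abel
  rw [hrest]
  refine Finset.dvd_sum fun i hi => hmid i ?_
  have := Finset.mem_range.1 hi
  omega

/-- Elements whose `p`-th power is divisible by `h^(p-1)` form a non-unital subring. -/
theorem rw_subring {B : Type*} [Ring B] (p : ℕ) (hp : p.Prime) (hodd : p ≠ 2)
    (hB : (p : B) = 0) (h : B) (hc : ∀ b, Commute h b) (hcom : ∀ u v : B, h ∣ u * v - v * u) :
    ∃ S : AddSubgroup B, (∀ a, a ∈ S ↔ h ^ (p - 1) ∣ a ^ p) ∧ (∀ a, h * a ∈ S) ∧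
      ∀ a b, a ∈ S → b ∈ S → a * b ∈ S := by
  have hadd : ∀ a b : B, h ^ (p - 1) ∣ a ^ p → h ^ (p - 1) ∣ b ^ p → h ^ (p - 1) ∣ (a + b) ^ p := by
    intro a b ha hb
    have := dvd_add (dvd_add (rw_add_pow p hp hodd hB h hc hcom a b) hb) ha
    simpa using this
  let S : AddSubgroup B :=
    { carrier := {a | h ^ (p - 1) ∣ a ^ p}
      add_mem' := fun {a b} ha hb => hadd a b ha hb
      zero_mem' := by simp [hp.ne_zero]
      neg_mem' := by
        intro a ha
        have ha' : h ^ (p - 1) ∣ a ^ p := ha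
        show h ^ (p - 1) ∣ (-a) ^ p
        rw [(hp.odd_of_ne_two hodd).neg_pow]
        exact (dvd_neg).2 ha' }
  have hmem : ∀ a, a ∈ S ↔ h ^ (p - 1) ∣ a ^ p := fun a => Iff.rfl
  have hhS : ∀ a, h * a ∈ S := by
    intro a
    rw [hmem, (hc a).mul_pow]
    exact (pow_dvd_pow h (Nat.sub_le p 1)).mul_right _
  have hsq : ∀ a, a ∈ S → a * a ∈ S := by
    intro a ha
    rw [hmem] at *
    rw [(Commute.refl a).mul_pow]
    exact ha.mul_right _
  refine ⟨S, hmem, hhS, fun a b ha hb => ?_⟩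
  obtain ⟨c, hc'⟩ := hcom a b
  have h2 : a * b + a * b ∈ S := by
    have : a * b + a * b = (a + b) * (a + b) - a * a - b * b + h * c := by
      rw [← hc']; noncomm_ring
    rw [this]
    exact S.add_mem (S.sub_mem (S.sub_mem (hsq _ (S.add_mem ha hb)) (hsq _ ha)) (hsq _ hb)) (hhS c)
  obtain ⟨q, hq⟩ := hp.odd_of_ne_two hodd
  have h3 := S.nsmul_mem h2 (q + 1)
  have h4 : (q + 1) • (a * b + a * b) = a * b := by
    have : (q + 1) • (a * b + a * b) = (p : ℕ) • (a * b) + a * b := by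
      rw [hq, ← two_nsmul, smul_smul, ← succ_nsmul]; congr 1; ring
    rw [this, nsmul_eq_mul, hB, zero_mul, zero_add]
  rwa [h4] at h3

/-- if `J ⊆ A(R)` is the two-sided ideal generated by `x_1,…,x_n,y_1,…,y_n`,
then every element of `h·A(R) + J` has its `p`-th power divisible by `h^{p−1}`. -/
theorem pow_p_of_augmentation_ideal_divisible_by_h_pow_p_sub_one
    (p n : ℕ) (hp : p.Prime) (hodd : p ≠ 2) (hn : 1 ≤ n)
    (R : Type) [CommRing R] (hpR : (p : R) = 0) (h : R) (hh : h ∈ nonZeroDivisors R)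
    (a : ReesWeyl p n R h)
    (ha : ∃ c : ReesWeyl p n R h, ∃ j ∈ TwoSidedIdeal.span
        (Set.range (reesX p n R h) ∪ Set.range (reesY p n R h)),
      a = algebraMap R (ReesWeyl p n R h) h * c + j) :
    ∃ c : ReesWeyl p n R h,
      a ^ p = algebraMap R (ReesWeyl p n R h) h ^ (p - 1) * c := by
  set A := ReesWeyl p n R h with hA
  set H : A := algebraMap R A h with hH
  have hB : (p : A) = 0 := by
    rw [← map_natCast (algebraMap R A), hpR, map_zero]
  have hc : ∀ b : A, Commute H b := fun b => Algebra.commutes h b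
  -- induction principle
  have hind : ∀ P : A → Prop, (∀ r, P (algebraMap R A r)) → (∀ i, P (reesX p n R h i)) →
      (∀ i, P (reesY p n R h i)) → (∀ a b, P a → P b → P (a + b)) →
      (∀ a b, P a → P b → P (a * b)) → ∀ a, P a := by
    intro P h1 h2 h3 h4 h5 a
    obtain ⟨w, rfl⟩ := RingQuot.mkAlgHom_surjective R (ReesWeylRel p n R h) a
    induction w using FreeAlgebra.induction with
    | grade0 r => rw [AlgHom.commutes]; exact h1 r
    | grade1 x =>
      cases x with
      | inl i => exact h2 i
      | inr i => exact h3 i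
    | mul a b ha hb => rw [map_mul]; exact h5 _ _ ha hb
    | add a b ha hb => rw [map_add]; exact h4 _ _ ha hb
  have rxx : ∀ i j, reesX p n R h i * reesX p n R h j = reesX p n R h j * reesX p n R h i := by
    intro i j
    have := RingQuot.mkAlgHom_rel R (ReesWeylRel.xx (p := p) (R := R) (h := h) i j)
    rw [map_mul, map_mul] at this
    exact this
  have ryy : ∀ i j, reesY p n R h i * reesY p n R h j = reesY p n R h j * reesY p n R h i := by
    intro i j
    have := RingQuot.mkAlgHom_rel R (ReesWeylRel.yy (p := p) (R := R) (h := h) i j)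
    rw [map_mul, map_mul] at this
    exact this
  have ryx : ∀ i j, ∃ c, reesY p n R h j * reesX p n R h i
      = reesX p n R h i * reesY p n R h j + H * c := by
    intro i j
    have := RingQuot.mkAlgHom_rel R (ReesWeylRel.yx (p := p) (R := R) (h := h) i j)
    by_cases hij : i = j
    · rw [if_pos hij, map_add, map_mul, map_mul, AlgHom.commutes] at this
      exact ⟨1, by rw [mul_one]; exact this⟩
    · rw [if_neg hij, map_add, map_mul, map_mul, map_zero] at this
      exact ⟨0, by rw [mul_zero]; exact this⟩
  have rxp : ∀ i, reesX p n R h i ^ p = 0 := by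
    intro i
    have := RingQuot.mkAlgHom_rel R (ReesWeylRel.xp (p := p) (R := R) (h := h) i)
    rw [map_pow, map_zero] at this
    exact this
  have ryp : ∀ i, reesY p n R h i ^ p = 0 := by
    intro i
    have := RingQuot.mkAlgHom_rel R (ReesWeylRel.yp (p := p) (R := R) (h := h) i)
    rw [map_pow, map_zero] at this
    exact this
  -- commutators are divisible by `h`
  have cadd : ∀ u a b : A, H ∣ u * a - a * u → H ∣ u * b - b * u →
      H ∣ u * (a + b) - (a + b) * u := by
    intro u a b h1 h2
    have := dvd_add h1 h2
    have e : u * (a + b) - (a + b) * u = u * a - a * u + (u * b - b * u) := by noncomm_ring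
    rwa [e]
  have cmul : ∀ u a b : A, H ∣ u * a - a * u → H ∣ u * b - b * u →
      H ∣ u * (a * b) - (a * b) * u := by
    intro u a b h1 h2
    obtain ⟨d, hd⟩ := h2
    have e : u * (a * b) - (a * b) * u = (u * a - a * u) * b + a * (u * b - b * u) := rw_id1 u a b
    rw [e, hd]
    refine dvd_add (h1.mul_right _) ⟨a * d, ?_⟩
    rw [← mul_assoc, ← (hc a).eq, mul_assoc]
  have csymm : ∀ a b : A, H ∣ a * b - b * a → H ∣ b * a - a * b := by
    intro a b hab
    rw [← neg_sub]
    exact (dvd_neg).2 hab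
  have calg : ∀ (u : A) r, H ∣ u * algebraMap R A r - algebraMap R A r * u := by
    intro u r
    rw [Algebra.commutes, sub_self]
    exact dvd_zero _
  have cyx : ∀ i j, H ∣ reesY p n R h j * reesX p n R h i - reesX p n R h i * reesY p n R h j := by
    intro i j
    obtain ⟨c, hc'⟩ := ryx i j
    exact ⟨c, by rw [hc', add_sub_cancel_left]⟩
  have cx : ∀ i v, H ∣ reesX p n R h i * v - v * reesX p n R h i := by
    intro i
    refine hind _ (calg _) (fun j => ?_) (fun j => csymm _ _ (cyx i j)) (cadd _) (cmul _)
    rw [rxx, sub_self]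
    exact dvd_zero _
  have cy : ∀ i v, H ∣ reesY p n R h i * v - v * reesY p n R h i := by
    intro i
    refine hind _ (calg _) (fun j => cyx j i) (fun j => ?_) (cadd _) (cmul _)
    rw [ryy, sub_self]
    exact dvd_zero _
  have hcom : ∀ u v : A, H ∣ u * v - v * u := by
    intro u
    exact hind _ (calg _) (fun j => csymm _ _ (cx j u)) (fun j => csymm _ _ (cy j u))
      (cadd _) (cmul _)
  obtain ⟨S, hmem, hhS, hmul⟩ := rw_subring p hp hodd hB H hc hcom
  have hX : ∀ i, reesX p n R h i ∈ S := fun i => (hmem _).2 (by rw [rxp]; exact dvd_zero _)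
  have hY : ∀ i, reesY p n R h i ∈ S := fun i => (hmem _).2 (by rw [ryp]; exact dvd_zero _)
  have hscal : ∀ r a, a ∈ S → algebraMap R A r * a ∈ S := by
    intro r a ha
    rw [hmem] at *
    obtain ⟨d, hd⟩ := ha
    rw [(Algebra.commute_algebraMap_left r a).mul_pow, hd]
    refine ⟨algebraMap R A r ^ p * d, ?_⟩
    rw [← mul_assoc, ← mul_assoc, ((hc (algebraMap R A r ^ p)).pow_left (p - 1)).eq]
  have hdec : ∀ w : A, ∃ r, w - algebraMap R A r ∈ S := by
    refine hind _ (fun r => ⟨r, by rw [sub_self]; exact S.zero_mem⟩)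
      (fun i => ⟨0, by rw [map_zero, sub_zero]; exact hX i⟩)
      (fun i => ⟨0, by rw [map_zero, sub_zero]; exact hY i⟩) ?_ ?_
    · rintro a b ⟨r, hr⟩ ⟨s, hs⟩
      refine ⟨r + s, ?_⟩
      rw [map_add, add_sub_add_comm]
      exact S.add_mem hr hs
    · rintro a b ⟨r, hr⟩ ⟨s, hs⟩
      refine ⟨r * s, ?_⟩
      have e : a * b - algebraMap R A (r * s) = (a - algebraMap R A r) * (b - algebraMap R A s)
          + algebraMap R A r * (b - algebraMap R A s)
          + algebraMap R A s * (a - algebraMap R A r) := by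
        rw [Algebra.commutes s, map_mul]
        exact rw_id2 _ _ _ _
      rw [e]
      exact S.add_mem (S.add_mem (hmul _ _ hr hs) (hscal _ _ hs)) (hscal _ _ hr)
  have hleft : ∀ w a, a ∈ S → w * a ∈ S := by
    intro w a ha
    obtain ⟨r, hr⟩ := hdec w
    have := S.add_mem (hmul _ _ hr ha) (hscal r a ha)
    rwa [← add_mul, sub_add_cancel] at this
  have hright : ∀ w a, a ∈ S → a * w ∈ S := by
    intro w a ha
    obtain ⟨r, hr⟩ := hdec w
    have := S.add_mem (hmul _ _ ha hr) (hscal r a ha)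
    rwa [Algebra.commutes, ← mul_add, sub_add_cancel] at this
  obtain ⟨c, j, hj, rfl⟩ := ha
  have hjS : j ∈ S := by
    induction hj using TwoSidedIdeal.span_induction with
    | mem x hx =>
      rcases hx with ⟨i, rfl⟩ | ⟨i, rfl⟩
      · exact hX i
      · exact hY i
    | zero => exact S.zero_mem
    | add x y _ _ hx hy => exact S.add_mem hx hy
    | neg x _ hx => exact S.neg_mem hx
    | left_absorb a x _ hx => exact hleft _ _ hx
    | right_absorb b x _ hx => exact hright _ _ hx
  exact (hmem _).1 (S.add_mem (hhS c) hjS)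
end
end

section
/- Let p be an odd prime, n ≥ 1, and let A_h = A(𝔽_p[[h]]) be the Rees reduced Weyl algebra over the power series ring 𝔽_p[[h]] with its distinguished element h. Then every 𝔽_p[[h]]-linear derivation D : A_h → A_h becomes inner after multiplication by h: there exists a ∈ A_h such that h·D(m) = a·m − m·a for all m ∈ A_h. -/
noncomputable section

namespace RWaux

/-- Abstract data of the reduced Weyl algebra: generators and partial derivatives. -/
structure WS (p n : ℕ) (R A : Type) [CommRing R] [Ring A] [Algebra R A] (h : R) where
  z : Fin n ⊕ Fin n → A
  d : Fin n ⊕ Fin n → A →ₗ[R] A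
  hxx : ∀ i j, z (Sum.inl i) * z (Sum.inl j) = z (Sum.inl j) * z (Sum.inl i)
  hyy : ∀ i j, z (Sum.inr i) * z (Sum.inr j) = z (Sum.inr j) * z (Sum.inr i)
  hyx : ∀ i j, z (Sum.inr j) * z (Sum.inl i) = z (Sum.inl i) * z (Sum.inr j) +
    if i = j then algebraMap R A h else 0
  zp : ∀ k, z k ^ p = 0
  ind : ∀ S : Submodule R A, 1 ∈ S → (∀ k, ∀ a ∈ S, z k * a ∈ S) → ∀ a, a ∈ S
  leib : ∀ k a b, d k (a * b) = d k a * b + a * d k b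
  dz : ∀ k l, d k (z l) = if k = l then 1 else 0
  inj : Function.Injective (algebraMap R A)

variable {p n : ℕ} {R A : Type} [CommRing R] [Ring A] [Algebra R A] {h : R}

namespace WS
variable (W : WS p n R A h)

theorem d_one (k) : W.d k 1 = 0 := by
  have := W.leib k 1 1
  simpa using this

theorem d_alg (k) (r : R) : W.d k (algebraMap R A r) = 0 := by
  rw [Algebra.algebraMap_eq_smul_one, map_smul, d_one, smul_zero]

theorem d_zmul_ne {k l} (hkl : k ≠ l) (a : A) : W.d k (W.z l * a) = W.z l * W.d k a := by
  rw [W.leib, W.dz, if_neg hkl]; simp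

theorem d_zmul_self (k) (a : A) : W.d k (W.z k * a) = W.z k * W.d k a + a := by
  rw [W.leib, W.dz, if_pos rfl, one_mul, add_comm]

theorem d_zpow_ne {k l} (hkl : k ≠ l) (m : ℕ) (a : A) :
    W.d k (W.z l ^ m * a) = W.z l ^ m * W.d k a := by
  induction m generalizing a with
  | zero => simp
  | succ m ih => rw [pow_succ, mul_assoc, ih, d_zmul_ne _ hkl, mul_assoc]

theorem d_zpow_self (k) (m : ℕ) (a : A) :
    W.d k (W.z k ^ (m + 1) * a) = W.z k ^ (m + 1) * W.d k a + ((m + 1 : ℕ) : R) • (W.z k ^ m * a) := by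
  induction m generalizing a with
  | zero => simp [d_zmul_self]
  | succ m ih =>
    rw [pow_succ, mul_assoc, ih, d_zmul_self, ← mul_assoc (W.z k ^ m), ← pow_succ, mul_add,
      ← mul_assoc, ← pow_succ]
    push_cast
    module

theorem dpow_zmul_self (k) (m : ℕ) (a : A) :
    (W.d k ^ (m + 1)) (W.z k * a) =
      W.z k * (W.d k ^ (m + 1)) a + ((m + 1 : ℕ) : R) • (W.d k ^ m) a := by
  induction m with
  | zero => simp [d_zmul_self]
  | succ m ih =>
    rw [pow_succ', Module.End.mul_apply, ih, map_add, d_zmul_self, map_smul,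
      ← Module.End.mul_apply, ← pow_succ', ← Module.End.mul_apply, ← pow_succ']
    push_cast
    module

theorem dpow_zmul_ne {k l} (hkl : k ≠ l) (m : ℕ) (a : A) :
    (W.d k ^ m) (W.z l * a) = W.z l * (W.d k ^ m) a := by
  induction m with
  | zero => simp
  | succ m ih =>
    rw [pow_succ', Module.End.mul_apply, ih, d_zmul_ne _ hkl, Module.End.mul_apply]

theorem dpow_one (k) (m : ℕ) : (W.d k ^ (m + 1)) 1 = 0 := by
  rw [pow_succ, Module.End.mul_apply, d_one, map_zero]

theorem dpow_p (hp : p.Prime) (hpR : (p : R) = 0) (k) (a : A) : (W.d k ^ p) a = 0 := by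
  obtain ⟨q, rfl⟩ : ∃ q, p = q + 1 := ⟨p - 1, by have := hp.pos; omega⟩
  refine W.ind (LinearMap.ker (W.d k ^ (q + 1))) ?_ ?_ a
  · simp [dpow_one]
  · intro l a ha
    rw [LinearMap.mem_ker] at *
    by_cases hkl : k = l
    · subst hkl; rw [dpow_zmul_self, ha, hpR]; simp
    · rw [dpow_zmul_ne _ hkl, ha, mul_zero]

theorem d_comm (k l) (a : A) : W.d k (W.d l a) = W.d l (W.d k a) := by
  have := W.ind (LinearMap.ker (W.d k * W.d l - W.d l * W.d k)) ?_ ?_ a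
  · simpa [sub_eq_zero] using this
  · simp [d_one]
  · intro m a ha
    simp only [LinearMap.mem_ker, LinearMap.sub_apply, Module.End.mul_apply, sub_eq_zero] at *
    simp only [W.leib, W.dz, map_add, ha]
    have e : ∀ (q r s : Fin n ⊕ Fin n), W.d q (if r = s then 1 else 0) = 0 := by
      intro q r s; split_ifs <;> simp [d_one]
    rw [e, e]
    abel

theorem dpow_comm (k l) (m : ℕ) (a : A) : W.d k ((W.d l ^ m) a) = (W.d l ^ m) (W.d k a) := by
  induction m generalizing a with
  | zero => simp
  | succ m ih => rw [pow_succ, Module.End.mul_apply, ih, d_comm, Module.End.mul_apply]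

/-- the element whose commutator is `h * d k` -/
def c (W : WS p n R A h) : Fin n ⊕ Fin n → A
  | Sum.inl j => W.z (Sum.inr j)
  | Sum.inr i => - W.z (Sum.inl i)

theorem c_z (k l) : W.c k * W.z l - W.z l * W.c k = if k = l then algebraMap R A h else 0 := by
  rcases k with k | k <;> rcases l with l | l <;>
    simp only [c, Sum.inl.injEq, Sum.inr.injEq, reduceCtorEq, if_false]
  · rw [W.hyx]; simp [eq_comm]
  · rw [W.hyy]; simp
  · rw [neg_mul, mul_neg, W.hxx]; simp
  · rw [neg_mul, mul_neg, W.hyx]; simp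

theorem c_comm (k) (a : A) : W.c k * a - a * W.c k = h • W.d k a := by
  have := W.ind (LinearMap.ker (LinearMap.mulLeft R (W.c k) - LinearMap.mulRight R (W.c k)
    - h • W.d k)) ?_ ?_ a
  · simpa [sub_eq_zero] using this
  · simp [d_one]
  · intro l a ha
    simp only [LinearMap.mem_ker, LinearMap.sub_apply, LinearMap.mulLeft_apply,
      LinearMap.mulRight_apply, LinearMap.smul_apply, sub_eq_zero] at *
    have e : W.c k * (W.z l * a) - W.z l * a * W.c k =
      (W.c k * W.z l - W.z l * W.c k) * a + W.z l * (W.c k * a - a * W.c k) := by noncomm_ring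
    rw [e, ha, c_z, W.leib, W.dz]
    split_ifs <;> simp [Algebra.algebraMap_eq_smul_one]

theorem d_c (k l) : ∃ r : R, W.d k (W.c l) = algebraMap R A r := by
  rcases l with l | l <;> simp only [c, map_neg, W.dz]
  · refine ⟨if k = Sum.inr l then 1 else 0, ?_⟩
    split_ifs <;> simp
  · refine ⟨-if k = Sum.inl l then 1 else 0, ?_⟩
    split_ifs <;> simp

theorem d_c_self (k) : W.d k (W.c k) = 0 := by
  rcases k with k | k <;> simp [c, W.dz]

theorem c_p (hp : p.Prime) (k) : W.c k ^ p = 0 := by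
  rcases k with k | k <;> simp only [c]
  · exact W.zp _
  · rw [neg_pow, W.zp, mul_zero]

/-! ### integration and projection -/

/-- integration operator -/
def I (W : WS p n R A h) (f : ℕ → R) (k : Fin n ⊕ Fin n) (a : A) : A :=
  ∑ i ∈ Finset.range (p - 1), (-f (i + 1)) • (W.z k ^ (i + 1) * (W.d k ^ i) a)

/-- projection operator -/
def P (W : WS p n R A h) (f : ℕ → R) (k : Fin n ⊕ Fin n) : A →ₗ[R] A :=
  ∑ i ∈ Finset.range p, f i • (LinearMap.mulLeft R (W.z k ^ i) ∘ₗ (W.d k ^ i))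

theorem P_apply (f : ℕ → R) (k) (a : A) :
    W.P f k a = ∑ i ∈ Finset.range p, f i • (W.z k ^ i * (W.d k ^ i) a) := by
  simp [P]

variable {f : ℕ → R}

theorem d_I (f0 : f 0 = 1)
    (fs : ∀ i, i + 1 < p → ((i + 1 : ℕ) : R) * f (i + 1) = - f i)
    (hp : p.Prime) (k) (a : A) (ha : (W.d k ^ (p - 1)) a = 0) : W.d k (W.I f k a) = a := by
  have key : ∀ i ∈ Finset.range (p - 1), W.d k ((-f (i + 1)) • (W.z k ^ (i + 1) * (W.d k ^ i) a)) =
      f i • (W.z k ^ i * (W.d k ^ i) a) - f (i + 1) • (W.z k ^ (i + 1) * (W.d k ^ (i + 1)) a) := by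
    intro i hi
    have := fs i (by simp at hi; omega)
    rw [map_smul, d_zpow_self, smul_add, smul_smul, neg_mul, mul_comm, this, pow_succ' (W.d k),
      Module.End.mul_apply]
    module
  rw [I, map_sum, Finset.sum_congr rfl key, Finset.sum_range_sub', ha, f0]
  simp

theorem d_I_ne {k l} (hkl : k ≠ l) (a : A) (ha : W.d k a = 0) : W.d k (W.I f l a) = 0 := by
  rw [I, map_sum]
  refine Finset.sum_eq_zero fun i _ => ?_
  rw [map_smul, d_zpow_ne _ hkl, dpow_comm, ha]
  simp

theorem exists_prim (f0 : f 0 = 1)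
    (fs : ∀ i, i + 1 < p → ((i + 1 : ℕ) : R) * f (i + 1) = - f i)
    (hp : p.Prime) (hpR : (p : R) = 0) (w : Fin n ⊕ Fin n → A)
    (hw : ∀ k l, W.d k (w l) = W.d l (w k)) (hw' : ∀ k, (W.d k ^ (p - 1)) (w k) = 0) :
    ∃ a, ∀ k, W.d k a = w k := by
  have : ∀ S : Finset (Fin n ⊕ Fin n), ∃ a, ∀ k ∈ S, W.d k a = w k := by
    intro S
    induction S using Finset.induction_on with
    | empty => exact ⟨0, by simp⟩
    | insert k S hk ih =>
      obtain ⟨a, ha⟩ := ih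
      refine ⟨a + W.I f k (w k - W.d k a), ?_⟩
      intro l hl
      by_cases hlk : l = k
      · subst hlk
        rw [map_add, d_I W f0 fs hp, add_sub_cancel]
        rw [map_sub, hw', ← Module.End.mul_apply, ← pow_succ, Nat.sub_add_cancel hp.one_le,
          dpow_p W hp hpR, sub_zero]
      · have hlS : l ∈ S := by simpa [hlk] using hl
        rw [map_add, d_I_ne W hlk, ha l hlS, add_zero]
        rw [map_sub, hw, d_comm, ha l hlS, sub_self]
  obtain ⟨a, ha⟩ := this Finset.univ
  exact ⟨a, fun k => ha k (Finset.mem_univ _)⟩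

theorem P_const (f0 : f 0 = 1) (hp : p.Prime) (k) (a : A) (ha : W.d k a = 0) : W.P f k a = a := by
  rw [P_apply]
  rw [Finset.sum_eq_single_of_mem 0 (by simp [hp.pos])]
  · simp [f0]
  · intro i _ hi
    obtain ⟨j, rfl⟩ := Nat.exists_eq_succ_of_ne_zero hi
    rw [Nat.succ_eq_add_one, pow_succ (W.d k), Module.End.mul_apply, ha]; simp

theorem P_zmul (f0 : f 0 = 1)
    (fs : ∀ i, i + 1 < p → ((i + 1 : ℕ) : R) * f (i + 1) = - f i)
    (k) (a : A) : W.P f k (W.z k * a) = 0 := by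
  let t : ℕ → A := fun i => match i with
    | 0 => 0
    | i + 1 => f i • (W.z k ^ (i + 1) * (W.d k ^ i) a)
  have key : ∀ i ∈ Finset.range p, f i • (W.z k ^ i * (W.d k ^ i) (W.z k * a)) = t (i + 1) - t i := by
    intro i hi
    cases i with
    | zero => simp [t]
    | succ i =>
      have := fs i (by simpa using hi)
      simp only [t]
      rw [dpow_zmul_self, mul_add, ← mul_assoc, ← pow_succ, mul_smul_comm, smul_add, smul_smul,
        mul_comm (f _), this, neg_smul, sub_eq_add_neg]
  rw [P_apply, Finset.sum_congr rfl key, Finset.sum_range_sub]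
  cases p with
  | zero => simp [t]
  | succ q => simp [t, W.zp]

theorem P_zmul_ne {k l} (hkl : k ≠ l) (hc : W.z k * W.z l = W.z l * W.z k) (a : A) :
    W.P f k (W.z l * a) = W.z l * W.P f k a := by
  rw [P_apply, P_apply, Finset.mul_sum]
  refine Finset.sum_congr rfl fun i _ => ?_
  have : Commute (W.z k ^ i) (W.z l) := (show Commute (W.z k) (W.z l) from hc).pow_left i
  rw [dpow_zmul_ne _ hkl, ← mul_assoc, this.eq, mul_assoc, mul_smul_comm]

theorem P_mul_const (k) (a b : A) (hb : W.d k b = 0) : W.P f k (a * b) = W.P f k a * b := by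
  have : ∀ i, (W.d k ^ i) (a * b) = (W.d k ^ i) a * b := by
    intro i
    induction i with
    | zero => simp
    | succ i ih =>
      rw [pow_succ', Module.End.mul_apply, ih, W.leib, hb, mul_zero, add_zero, Module.End.mul_apply]
  simp only [P_apply, this, Finset.sum_mul, smul_mul_assoc, mul_assoc]

/-- product of the projections over a half of the generators -/
def Q (W : WS p n R A h) (f : ℕ → R) (s : Fin n → Fin n ⊕ Fin n) (l : List (Fin n)) : A →ₗ[R] A :=
  (l.map fun i => W.P f (s i)).prod

theorem Q_nil (s : Fin n → Fin n ⊕ Fin n) (a : A) : W.Q f s [] a = a := by simp [Q]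

theorem Q_cons (s : Fin n → Fin n ⊕ Fin n) (i : Fin n) (l : List (Fin n)) (a : A) :
    W.Q f s (i :: l) a = W.P f (s i) (W.Q f s l a) := by simp [Q]

theorem Q_const (f0 : f 0 = 1) (hp : p.Prime) (s : Fin n → Fin n ⊕ Fin n) (l : List (Fin n)) (a : A)
    (ha : ∀ i, W.d (s i) a = 0) : W.Q f s l a = a := by
  induction l with
  | nil => exact Q_nil ..
  | cons i l ih => rw [Q_cons, ih, P_const W f0 hp _ _ (ha i)]

theorem Q_mul_const (s : Fin n → Fin n ⊕ Fin n) (l : List (Fin n)) (a b : A)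
    (hb : ∀ i, W.d (s i) b = 0) : W.Q f s l (a * b) = W.Q f s l a * b := by
  induction l with
  | nil => simp [Q_nil]
  | cons i l ih => rw [Q_cons, ih, P_mul_const _ _ _ _ (hb i), Q_cons]

theorem Q_zmul (f0 : f 0 = 1)
    (fs : ∀ i, i + 1 < p → ((i + 1 : ℕ) : R) * f (i + 1) = - f i)
    (s : Fin n → Fin n ⊕ Fin n) (hs : Function.Injective s)
    (hc : ∀ i j, W.z (s i) * W.z (s j) = W.z (s j) * W.z (s i)) (l : List (Fin n)) (i) (a : A) :
    W.Q f s l (W.z (s i) * a) = if i ∈ l then 0 else W.z (s i) * W.Q f s l a := by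
  induction l with
  | nil => simp [Q_nil]
  | cons j l ih =>
    rw [Q_cons, ih, Q_cons]
    by_cases hil : i ∈ l
    · simp [hil]
    · by_cases hij : i = j
      · subst hij; simp [hil, P_zmul W f0 fs]
      · simp only [hil, if_false, List.mem_cons, hij, or_false]
        exact P_zmul_ne W (fun e => hij (hs e).symm) (hc _ _) _

/-- subalgebra generated by a half of the generators -/
def C (W : WS p n R A h) (s : Fin n → Fin n ⊕ Fin n) : Subalgebra R A :=
  Algebra.adjoin R (Set.range fun i => W.z (s i))

theorem Q_C (f0 : f 0 = 1)
    (fs : ∀ i, i + 1 < p → ((i + 1 : ℕ) : R) * f (i + 1) = - f i)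
    (hp : p.Prime) (s : Fin n → Fin n ⊕ Fin n) (hs : Function.Injective s)
    (hc : ∀ i j, W.z (s i) * W.z (s j) = W.z (s j) * W.z (s i)) (a : A) (ha : a ∈ W.C s) :
    ∃ r : R, W.Q f s (List.finRange n) a = algebraMap R A r := by
  -- stronger: every right multiple
  have key : ∀ a ∈ W.C s, ∃ r : R, ∀ b : A, W.Q f s (List.finRange n) (a * b) =
      r • W.Q f s (List.finRange n) b := by
    intro a ha
    induction ha using Algebra.adjoin_induction with
    | mem x hx =>
      obtain ⟨i, rfl⟩ := hx
      refine ⟨0, fun b => ?_⟩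
      simp [Q_zmul W f0 fs s hs hc]
    | algebraMap r =>
      refine ⟨r, fun b => ?_⟩
      rw [← Algebra.smul_def, map_smul]
    | add x y _ _ hx hy =>
      obtain ⟨r, hr⟩ := hx
      obtain ⟨t, ht⟩ := hy
      exact ⟨r + t, fun b => by rw [add_mul, map_add, hr, ht, add_smul]⟩
    | mul x y _ _ hx hy =>
      obtain ⟨r, hr⟩ := hx
      obtain ⟨t, ht⟩ := hy
      exact ⟨r * t, fun b => by rw [mul_assoc, hr, ht, mul_smul]⟩
  obtain ⟨r, hr⟩ := key a ha
  refine ⟨r, ?_⟩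
  have := hr 1
  rw [mul_one, Q_const W f0 hp s _ 1 (fun i => d_one W _)] at this
  rw [this, Algebra.algebraMap_eq_smul_one]

theorem d_C (s : Fin n → Fin n ⊕ Fin n) (k) (a : A) (ha : a ∈ W.C s) : W.d k a ∈ W.C s := by
  induction ha using Algebra.adjoin_induction with
  | mem x hx =>
    obtain ⟨i, rfl⟩ := hx
    simp only [W.dz]
    split_ifs
    · exact one_mem _
    · exact zero_mem _
  | algebraMap r => rw [d_alg]; exact zero_mem _
  | add x y _ _ hx hy => rw [map_add]; exact add_mem hx hy
  | mul x y hx' hy' hx hy =>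
    rw [W.leib]; exact add_mem (mul_mem hx hy') (mul_mem hx' hy)

theorem d_C_zero (s : Fin n → Fin n ⊕ Fin n) (k) (hk : ∀ i, k ≠ s i) (a : A) (ha : a ∈ W.C s) :
    W.d k a = 0 := by
  induction ha using Algebra.adjoin_induction with
  | mem x hx =>
    obtain ⟨i, rfl⟩ := hx
    simp [W.dz, hk i]
  | algebraMap r => rw [d_alg]
  | add x y _ _ hx hy => rw [map_add, hx, hy, add_zero]
  | mul x y hx' hy' hx hy => rw [W.leib, hx, hy]; simp

theorem mem_CC (a : A) : a ∈ Subalgebra.toSubmodule (W.C Sum.inl) * Subalgebra.toSubmodule (W.C Sum.inr) := by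
  refine W.ind _ ?_ ?_ a
  · have := Submodule.mul_mem_mul (M := Subalgebra.toSubmodule (W.C Sum.inl))
      (N := Subalgebra.toSubmodule (W.C Sum.inr)) (one_mem (W.C Sum.inl)) (one_mem (W.C Sum.inr))
    rwa [mul_one] at this
  · intro k a ha
    induction ha using Submodule.mul_induction_on' with
    | mem_mul_mem x hx y hy =>
      rcases k with k | k
      · rw [← mul_assoc]
        exact Submodule.mul_mem_mul (mul_mem (S := Subalgebra R A)
          (Algebra.subset_adjoin ⟨k, rfl⟩) hx) hy
      · have e := W.c_comm (Sum.inl k) x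
        simp only [c] at e
        rw [← mul_assoc, eq_add_of_sub_eq e, add_mul, mul_assoc x]
        refine add_mem ?_ ?_
        · exact Submodule.mul_mem_mul (Submodule.smul_mem _ _ (W.d_C _ _ _ hx)) hy
        · exact Submodule.mul_mem_mul hx (mul_mem (S := Subalgebra R A)
            (Algebra.subset_adjoin ⟨k, rfl⟩) hy)
    | add x _ y _ hx hy => rw [mul_add]; exact add_mem hx hy

theorem const_scalar (f0 : f 0 = 1)
    (fs : ∀ i, i + 1 < p → ((i + 1 : ℕ) : R) * f (i + 1) = - f i)
    (hp : p.Prime) (a : A) (ha : ∀ k, W.d k a = 0) :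
    ∃ r : R, a = algebraMap R A r := by
  have h1 : ∀ b : A, W.Q f Sum.inl (List.finRange n) b ∈ W.C Sum.inr := by
    intro b
    have hb := W.mem_CC b
    induction hb using Submodule.mul_induction_on' with
    | mem_mul_mem x hx y hy =>
      rw [Q_mul_const W _ _ _ _ (fun i => W.d_C_zero _ _ (by simp) _ hy)]
      obtain ⟨r, hr⟩ := Q_C W f0 fs hp Sum.inl Sum.inl_injective W.hxx x hx
      rw [hr]
      exact mul_mem (algebraMap_mem _ _) hy
    | add x _ y _ hx hy => rw [map_add]; exact add_mem hx hy
  have h2 := h1 a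
  rw [Q_const W f0 hp _ _ _ (fun i => ha _)] at h2
  obtain ⟨r, hr⟩ := Q_C W f0 fs hp Sum.inr Sum.inr_injective W.hyy a h2
  rw [Q_const W f0 hp _ _ _ (fun i => ha _)] at hr
  exact ⟨r, hr⟩

theorem torsion_free (W : WS p n R A h) (f0 : f 0 = 1)
    (fs : ∀ i, i + 1 < p → ((i + 1 : ℕ) : R) * f (i + 1) = - f i) (hp : p.Prime) (hpR : (p : R) = 0) (hh : ∀ r : R, h * r = 0 → r = 0)
    (a : A) (ha : h • a = 0) : a = 0 := by
  have : ∀ S : Finset (Fin n ⊕ Fin n), ∀ a : A, h • a = 0 → (∀ k ∉ S, W.d k a = 0) → a = 0 := by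
    intro S
    induction S using Finset.induction_on with
    | empty =>
      intro a ha hk
      obtain ⟨r, rfl⟩ := const_scalar W f0 fs hp a (fun k => hk k (by simp))
      rw [Algebra.smul_def, ← map_mul] at ha
      have := hh r (W.inj (by rw [ha, map_zero]))
      rw [this, map_zero]
    | insert k S hk ih =>
      intro a ha hl
      have hdesc : ∀ j, (W.d k ^ j) a = 0 → a = 0 := by
        intro j
        induction j with
        | zero => simp
        | succ j ihj =>
          intro hj
          apply ihj
          apply ih
          · rw [← map_smul, ha, map_zero]
          · intro l hlS
            by_cases hlk : l = k
            · subst hlk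
              rwa [← Module.End.mul_apply, ← pow_succ']
            · rw [dpow_comm, hl l (by simp [hlk, hlS]), map_zero]
      exact hdesc p (W.dpow_p hp hpR k a)
  exact this Finset.univ a ha (by simp)

theorem D_pow (D : A →ₗ[R] A) (hD : ∀ a b, D (a * b) = D a * b + a * D b) (k) (m : ℕ) :
    D (W.c k ^ m) = ∑ j ∈ Finset.range m, (m.choose (j + 1) : R) •
      (W.c k ^ (m - 1 - j) * ((-h) ^ j • (W.d k ^ j) (D (W.c k)))) := by
  have D1 : D 1 = 0 := by simpa using hD 1 1
  set u := D (W.c k) with hu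
  set v : ℕ → A := fun j => (-h) ^ j • (W.d k ^ j) u with hv
  have hvc : ∀ j, v j * W.c k = W.c k * v j + v (j + 1) := by
    intro j
    have e := W.c_comm k (v j)
    have : v (j + 1) = - (h • W.d k (v j)) := by
      simp only [hv]
      rw [map_smul, pow_succ' (W.d k), Module.End.mul_apply, pow_succ]
      module
    rw [this, ← e]; abel
  change _ = ∑ j ∈ Finset.range m, (m.choose (j + 1) : R) • (W.c k ^ (m - 1 - j) * v j)
  induction m with
  | zero => simp [D1]
  | succ m ih =>
    rw [pow_succ, hD, ih, ← hu, Finset.sum_mul]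
    have e1 : ∀ j ∈ Finset.range m, (m.choose (j + 1) : R) • (W.c k ^ (m - 1 - j) * v j) * W.c k =
        (m.choose (j + 1) : R) • (W.c k ^ (m - j) * v j) +
        (m.choose (j + 1) : R) • (W.c k ^ (m - (j + 1)) * v (j + 1)) := by
      intro j hj
      have hj := Finset.mem_range.1 hj
      rw [smul_mul_assoc, mul_assoc, hvc, mul_add, ← mul_assoc, ← pow_succ, smul_add,
        show m - 1 - j + 1 = m - j by omega, show m - 1 - j = m - (j + 1) by omega]
    rw [Finset.sum_congr rfl e1, Finset.sum_add_distrib]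
    have e2 : ∀ j ∈ Finset.range (m + 1), ((m + 1).choose (j + 1) : R) •
        (W.c k ^ (m + 1 - 1 - j) * v j) = (m.choose (j + 1) : R) • (W.c k ^ (m - j) * v j) +
        (m.choose j : R) • (W.c k ^ (m - j) * v j) := by
      intro j hj
      rw [Nat.choose_succ_succ, Nat.add_sub_cancel]
      push_cast
      module
    rw [Finset.sum_congr rfl e2, Finset.sum_add_distrib, Finset.sum_range_succ,
      Finset.sum_range_succ' (fun j => (m.choose j : R) • (W.c k ^ (m - j) * v j))]
    simp [hv, add_assoc]

theorem mainThm (W : WS p n R A h) (f0 : f 0 = 1)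
    (fs : ∀ i, i + 1 < p → ((i + 1 : ℕ) : R) * f (i + 1) = - f i) (hp : p.Prime) (hpR : (p : R) = 0) (hh : ∀ r : R, h * r = 0 → r = 0)
    (D : A →ₗ[R] A) (hD : ∀ a b, D (a * b) = D a * b + a * D b) :
    ∃ a : A, ∀ m : A, algebraMap R A h * D m = a * m - m * a := by
  have D1 : D 1 = 0 := by simpa using hD 1 1
  have tf := torsion_free W f0 fs hp hpR hh
  have tfp : ∀ m : ℕ, ∀ a : A, (-h) ^ m • a = 0 → a = 0 := by
    intro m
    induction m with
    | zero => simp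
    | succ m ih =>
      intro a ha
      apply ih
      apply tf
      rw [pow_succ', mul_smul, neg_smul, neg_eq_zero] at ha
      exact ha
  have cl1 : ∀ k l, W.d k (- D (W.c l)) = W.d l (- D (W.c k)) := by
    intro k l
    rw [← sub_eq_zero]
    apply tf
    rw [smul_sub, ← c_comm, ← c_comm]
    obtain ⟨r, hr⟩ := W.d_c k l
    have e := congrArg D (W.c_comm k (W.c l))
    rw [hr, map_smul, Algebra.algebraMap_eq_smul_one, map_smul, D1, map_sub, hD, hD] at e
    simp only [smul_zero] at e
    rw [← neg_eq_zero, ← e]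
    noncomm_ring
  have cl2 : ∀ k, (W.d k ^ (p - 1)) (- D (W.c k)) = 0 := by
    intro k
    obtain ⟨q, rfl⟩ : ∃ q, p = q + 1 := ⟨p - 1, by have := hp.pos; omega⟩
    have e := W.D_pow D hD k (q + 1)
    rw [W.c_p hp, map_zero, Finset.sum_range_succ, Finset.sum_eq_zero] at e
    · simp only [zero_add, Nat.choose_self, Nat.cast_one, one_smul, Nat.add_sub_cancel,
        Nat.sub_self, pow_zero, one_mul] at e
      rw [Nat.add_sub_cancel, map_neg, tfp q _ e.symm, neg_zero]
    · intro j hj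
      have hj := Finset.mem_range.1 hj
      obtain ⟨t, ht⟩ := hp.dvd_choose_self (k := j + 1) (by omega) (by omega)
      rw [ht, Nat.cast_mul, hpR]; simp
  obtain ⟨a, ha⟩ := exists_prim W f0 fs hp hpR (fun k => - D (W.c k)) cl1 cl2
  · refine ⟨a, fun m => ?_⟩
    have hc : ∀ k, h • D (W.c k) = a * W.c k - W.c k * a := by
      intro k
      have := W.c_comm k a
      rw [ha, smul_neg] at this
      rw [← neg_inj, ← this]; abel
    have hz : ∀ k, h • D (W.z k) = a * W.z k - W.z k * a := by
      rintro (k | k)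
      · have := hc (Sum.inr k)
        simp only [c, map_neg, smul_neg, mul_neg, neg_mul] at this
        rw [← neg_inj, this]; abel
      · exact hc (Sum.inl k)
    have := W.ind (LinearMap.ker (h • D - (LinearMap.mulLeft R a - LinearMap.mulRight R a))) ?_ ?_ m
    · rw [← Algebra.smul_def]
      simpa [sub_eq_zero] using this
    · simp [D1]
    · intro k b hb
      simp only [LinearMap.mem_ker, LinearMap.sub_apply, LinearMap.mulLeft_apply,
        LinearMap.mulRight_apply, LinearMap.smul_apply, sub_eq_zero] at *
      rw [hD, smul_add, ← smul_mul_assoc, ← mul_smul_comm, hb, hz]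
      noncomm_ring

end WS
end RWaux

namespace RWaux
section model
variable (p n : ℕ) [hp : Fact p.Prime] (R : Type) [CommRing R] [CharP R p] (h : R)

/-- operator of the `x` generator in the model -/
def opX (i : Fin n) : Module.End R ((Fin n → ZMod p) → R) where
  toFun g a := h * ZMod.castHom (dvd_refl p) R (a i) * g (a - Pi.single i 1)
  map_add' g g' := by ext a; simp; ring
  map_smul' r g := by ext a; simp; ring

/-- operator of the `y` generator in the model -/
def opY (i : Fin n) : Module.End R ((Fin n → ZMod p) → R) where
  toFun g a := (if a i = -1 then 0 else 1) * g (a + Pi.single i 1)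
  map_add' g g' := by ext a; exact mul_add _ _ _
  map_smul' r g := by ext a; simp

theorem opX_pow (i : Fin n) (m : ℕ) (g : (Fin n → ZMod p) → R) (a : Fin n → ZMod p) :
    (opX p n R h i ^ m) g a = (∏ l ∈ Finset.range m, (h * ZMod.castHom (dvd_refl p) R (a i - l)))
      * g (a - Pi.single i (m : ZMod p)) := by
  induction m generalizing g with
  | zero => simp
  | succ m ih =>
    rw [pow_succ, Module.End.mul_apply, ih, Finset.prod_range_succ, mul_assoc]
    congr 1
    change h * ZMod.castHom (dvd_refl p) R ((a - Pi.single i (m : ZMod p) : Fin n → ZMod p) i) *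
      g (a - Pi.single i (m : ZMod p) - Pi.single i 1) = _
    rw [sub_sub, ← Pi.single_add]
    simp

theorem opY_pow (i : Fin n) (m : ℕ) (g : (Fin n → ZMod p) → R) (a : Fin n → ZMod p) :
    (opY p n R i ^ m) g a = (∏ l ∈ Finset.range m, (if a i + l = -1 then (0 : R) else 1))
      * g (a + Pi.single i (m : ZMod p)) := by
  induction m generalizing g with
  | zero => simp
  | succ m ih =>
    rw [pow_succ, Module.End.mul_apply, ih, Finset.prod_range_succ, mul_assoc]
    congr 1
    change (if (a + Pi.single i (m : ZMod p) : Fin n → ZMod p) i = -1 then (0 : R) else 1) *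
      g (a + Pi.single i (m : ZMod p) + Pi.single i 1) = _
    rw [add_assoc, ← Pi.single_add]
    simp

theorem opX_p (i : Fin n) : opX p n R h i ^ p = 0 := by
  have : NeZero p := ⟨hp.out.ne_zero⟩
  refine LinearMap.ext fun g => funext fun a => ?_
  rw [opX_pow, Finset.prod_eq_zero (i := (a i).val)]
  · simp
  · simpa using ZMod.val_lt _
  · simp

theorem opY_p (i : Fin n) : opY p n R i ^ p = 0 := by
  have : NeZero p := ⟨hp.out.ne_zero⟩
  refine LinearMap.ext fun g => funext fun a => ?_
  rw [opY_pow, Finset.prod_eq_zero (i := (-1 - a i).val)]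
  · simp
  · simpa using ZMod.val_lt _
  · simp

theorem opXX (i j : Fin n) : opX p n R h i * opX p n R h j = opX p n R h j * opX p n R h i := by
  by_cases hij : i = j
  · rw [hij]
  refine LinearMap.ext fun g => funext fun a => ?_
  simp only [opX, Module.End.mul_apply, LinearMap.coe_mk, AddHom.coe_mk, Pi.sub_apply,
    Pi.single_eq_of_ne hij, Pi.single_eq_of_ne (Ne.symm hij), sub_zero]
  rw [sub_right_comm]; ring

theorem opYY (i j : Fin n) : opY p n R i * opY p n R j = opY p n R j * opY p n R i := by
  by_cases hij : i = j
  · rw [hij]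
  refine LinearMap.ext fun g => funext fun a => ?_
  simp only [opY, Module.End.mul_apply, LinearMap.coe_mk, AddHom.coe_mk, Pi.add_apply,
    Pi.single_eq_of_ne hij, Pi.single_eq_of_ne (Ne.symm hij), add_zero]
  rw [add_right_comm]; ring

theorem opYX (i j : Fin n) : opY p n R j * opX p n R h i = opX p n R h i * opY p n R j +
    if i = j then algebraMap R _ h else 0 := by
  by_cases hij : i = j
  · subst hij
    refine LinearMap.ext fun g => funext fun a => ?_
    rw [if_pos rfl]
    simp only [opY, opX, Module.End.mul_apply, LinearMap.coe_mk, AddHom.coe_mk, Pi.add_apply,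
      Pi.sub_apply, Pi.single_eq_same, add_sub_cancel_right, sub_add_cancel, LinearMap.add_apply,
      Module.algebraMap_end_apply, Pi.smul_apply, smul_eq_mul, map_add, map_one, sub_eq_iff_eq_add,
      neg_add_cancel]
    by_cases h1 : a i = -1
    · rw [if_pos h1, h1]
      have : (-1 : ZMod p) ≠ 0 := by simp
      rw [if_neg this]
      simp
    · rw [if_neg h1]
      by_cases h0 : a i = 0
      · simp [h0]
      · rw [if_neg h0]; ring
  · refine LinearMap.ext fun g => funext fun a => ?_
    rw [if_neg hij]
    simp only [opY, opX, Module.End.mul_apply, LinearMap.coe_mk, AddHom.coe_mk, Pi.add_apply,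
      Pi.sub_apply, Pi.single_eq_of_ne hij, Pi.single_eq_of_ne (Ne.symm hij), sub_zero, add_zero]
    rw [add_sub_right_comm]; ring

/-- the representation -/
def rep : ReesWeyl p n R h →ₐ[R] Module.End R ((Fin n → ZMod p) → R) :=
  RingQuot.liftAlgHom R ⟨FreeAlgebra.lift R (Sum.elim (opX p n R h) (opY p n R)), by
    intro a b hab
    induction hab with
    | xx i j => simpa using opXX p n R h i j
    | yy i j => simpa using opYY p n R i j
    | yx i j =>
      have := opYX p n R h i j
      split_ifs at this ⊢ <;> simpa using this
    | xp i => simpa using opX_p p n R h i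
    | yp i => simpa using opY_p p n R i⟩

theorem alg_inj : Function.Injective (algebraMap R (ReesWeyl p n R h)) := by
  intro r s hrs
  have := congrArg (rep p n R h) hrs
  rw [AlgHom.commutes, AlgHom.commutes] at this
  have := congrFun (LinearMap.congr_fun this (fun _ => 1)) 0
  simpa using this

/-- generators -/
def gz (k : Fin n ⊕ Fin n) : ReesWeyl p n R h :=
  RingQuot.mkAlgHom R (ReesWeylRel p n R h) (FreeAlgebra.ι R k)

theorem gz_ind (S : Submodule R (ReesWeyl p n R h)) (h1 : 1 ∈ S)
    (hS : ∀ k, ∀ a ∈ S, gz p n R h k * a ∈ S) (a : ReesWeyl p n R h) : a ∈ S := by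
  obtain ⟨a, rfl⟩ := RingQuot.mkAlgHom_surjective R (ReesWeylRel p n R h) a
  suffices H : ∀ b ∈ S, RingQuot.mkAlgHom R (ReesWeylRel p n R h) a * b ∈ S by
    simpa using H 1 h1
  induction a using FreeAlgebra.induction with
  | grade0 r =>
    intro b hb
    rw [AlgHom.commutes, ← Algebra.smul_def]
    exact S.smul_mem _ hb
  | grade1 k => intro b hb; exact hS k b hb
  | mul a b iha ihb => intro c hc; rw [map_mul, mul_assoc]; exact iha _ (ihb _ hc)
  | add a b iha ihb => intro c hc; rw [map_add, add_mul]; exact add_mem (iha _ hc) (ihb _ hc)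

theorem gxx (i j) : gz p n R h (Sum.inl i) * gz p n R h (Sum.inl j) =
    gz p n R h (Sum.inl j) * gz p n R h (Sum.inl i) := by
  simpa [gz] using RingQuot.mkAlgHom_rel R (ReesWeylRel.xx (p := p) (h := h) i j)

theorem gyy (i j) : gz p n R h (Sum.inr i) * gz p n R h (Sum.inr j) =
    gz p n R h (Sum.inr j) * gz p n R h (Sum.inr i) := by
  simpa [gz] using RingQuot.mkAlgHom_rel R (ReesWeylRel.yy (p := p) (h := h) i j)

theorem gyx (i j) : gz p n R h (Sum.inr j) * gz p n R h (Sum.inl i) =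
    gz p n R h (Sum.inl i) * gz p n R h (Sum.inr j) +
      if i = j then algebraMap R (ReesWeyl p n R h) h else 0 := by
  have := RingQuot.mkAlgHom_rel R (ReesWeylRel.yx (p := p) (h := h) i j)
  split_ifs at this ⊢ <;> simpa [gz] using this

theorem gzp (k) : gz p n R h k ^ p = 0 := by
  rcases k with k | k
  · simpa [gz] using RingQuot.mkAlgHom_rel R (ReesWeylRel.xp (p := p) (h := h) k)
  · simpa [gz] using RingQuot.mkAlgHom_rel R (ReesWeylRel.yp (p := p) (h := h) k)

open DualNumber TrivSqZeroExt

theorem dual_pow {A : Type} [Ring A] (a : A) (m : ℕ) (e : A) (he : Commute a e) :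
    ((inl a + inr e : DualNumber A)) ^ (m + 1) = inl (a ^ (m + 1)) + inr ((m + 1 : A) * (a ^ m * e)) := by
  induction m with
  | zero => simp
  | succ m ih =>
    rw [pow_succ, ih]
    have h1 : a ^ m * e * a = a ^ (m + 1) * e := by
      rw [mul_assoc, ← he.eq, ← mul_assoc, ← pow_succ]
    ext
    · simp [pow_succ]
    · simp only [DualNumber.snd_mul, fst_add, fst_inl, fst_inr, snd_add, snd_inl, snd_inr, zero_add, add_zero]
      rw [mul_assoc, h1]
      push_cast
      noncomm_ring

/-- Kronecker delta -/
def dl (k l : Fin n ⊕ Fin n) : ReesWeyl p n R h := if k = l then 1 else 0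

theorem dl_comm (k l : Fin n ⊕ Fin n) (a : ReesWeyl p n R h) :
    dl p n R h k l * a = a * dl p n R h k l := by
  unfold dl; split_ifs <;> simp

/-- second component -/
def gsnd : DualNumber (ReesWeyl p n R h) →ₗ[R] ReesWeyl p n R h where
  toFun a := a.snd
  map_add' _ _ := rfl
  map_smul' _ _ := rfl

/-- infinitesimal translation -/
def tr (k : Fin n ⊕ Fin n) : ReesWeyl p n R h →ₐ[R] DualNumber (ReesWeyl p n R h) :=
  RingQuot.liftAlgHom R ⟨FreeAlgebra.lift R
      (fun l => inl (gz p n R h l) + inr (dl p n R h k l)), by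
    have hc := dl_comm p n R h
    have hpA : (p : ReesWeyl p n R h) = 0 := by
      rw [← map_natCast (algebraMap R _), CharP.cast_eq_zero, map_zero]
    have hpw : ∀ l, (inl (gz p n R h l) + inr (dl p n R h k l) :
        DualNumber (ReesWeyl p n R h)) ^ p = 0 := by
      intro l
      obtain ⟨q, hq⟩ : ∃ q, p = q + 1 := ⟨p - 1, by have := hp.out.pos; omega⟩
      have e := dual_pow (gz p n R h l) q (dl p n R h k l) (hc _ _ _).symm
      have h2 : (q + 1 : ReesWeyl p n R h) = 0 := by rw [← hpA, ← Nat.cast_succ]; congr 1; exact hq.symm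
      have h3 := gzp p n R h l
      rw [← hq, h2, h3] at e
      rw [e]; simp
    intro a b hab
    induction hab with
    | xx i j =>
      simp only [map_mul, FreeAlgebra.lift_ι_apply]
      ext
      · simpa using gxx p n R h i j
      · simp only [DualNumber.snd_mul, fst_add, fst_inl, fst_inr, snd_add, snd_inl, snd_inr, zero_add, add_zero, hc]
        rw [add_comm]
    | yy i j =>
      simp only [map_mul, FreeAlgebra.lift_ι_apply]
      ext
      · simpa using gyy p n R h i j
      · simp only [DualNumber.snd_mul, fst_add, fst_inl, fst_inr, snd_add, snd_inl, snd_inr, zero_add, add_zero, hc]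
        rw [add_comm]
    | yx i j =>
      have e := gyx p n R h i j
      simp only [map_add, map_mul, FreeAlgebra.lift_ι_apply]
      have e2 : (FreeAlgebra.lift R (fun l => (inl (gz p n R h l) + inr (dl p n R h k l) : DualNumber (ReesWeyl p n R h))))
        (if i = j then algebraMap R (FreeAlgebra R (Fin n ⊕ Fin n)) h else 0) =
          inl (if i = j then algebraMap R (ReesWeyl p n R h) h else 0) := by
        split_ifs
        · rw [AlgHom.commutes]; rfl
        · simp
      rw [e2]
      ext
      · simpa using e
      · simp only [DualNumber.snd_mul, fst_add, fst_inl, fst_inr, snd_add, snd_inl, snd_inr, zero_add, add_zero, hc]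
        rw [add_comm]
    | xp i => simpa using hpw (Sum.inl i)
    | yp i => simpa using hpw (Sum.inr i)⟩

theorem tr_gz (k l) : tr p n R h k (gz p n R h l) =
    inl (gz p n R h l) + inr (dl p n R h k l) := by
  rw [tr, gz, RingQuot.liftAlgHom_mkAlgHom_apply, FreeAlgebra.lift_ι_apply]
  rfl

theorem fst_tr (k) (a : ReesWeyl p n R h) : (tr p n R h k a).fst = a := by
  have := gz_ind p n R h (LinearMap.ker
    ((TrivSqZeroExt.fstHom R (ReesWeyl p n R h) (ReesWeyl p n R h)).toLinearMap ∘ₗ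
      (tr p n R h k).toLinearMap - LinearMap.id)) ?_ ?_ a
  · simpa [sub_eq_zero] using this
  · simp
  · intro l a ha
    simp only [LinearMap.mem_ker, LinearMap.sub_apply, LinearMap.comp_apply, AlgHom.toLinearMap_apply,
      LinearMap.id_apply, sub_eq_zero, map_mul] at *
    rw [ha, tr_gz]
    simp

/-- partial derivative -/
def gd (k : Fin n ⊕ Fin n) : ReesWeyl p n R h →ₗ[R] ReesWeyl p n R h :=
  gsnd p n R h ∘ₗ (tr p n R h k).toLinearMap

/-- the reduced Weyl algebra as an instance of the abstract data -/
def theWS : WS p n R (ReesWeyl p n R h) h where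
  z := gz p n R h
  d := gd p n R h
  hxx := gxx p n R h
  hyy := gyy p n R h
  hyx := gyx p n R h
  zp := gzp p n R h
  ind := gz_ind p n R h
  leib k a b := by
    change (tr p n R h k (a * b)).snd = (tr p n R h k a).snd * b + a * (tr p n R h k b).snd
    rw [map_mul, DualNumber.snd_mul, fst_tr, fst_tr, add_comm]
  dz k l := by
    change (tr p n R h k (gz p n R h l)).snd = _
    rw [tr_gz, snd_add, snd_inl, snd_inr, zero_add, dl]
  inj := alg_inj p n R h

end model
end RWaux

/-- every `𝔽_p[[h]]`-linear derivation of the Rees reduced Weyl algebra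
`A_h = A(𝔽_p[[h]])` becomes inner after multiplication by `h`: there is an `a ∈ A_h`
with `h·D(m) = a·m − m·a` for all `m`. -/
theorem derivation_of_A_h_inner_after_mul_h
    (p n : ℕ) (hp : p.Prime) (hodd : p ≠ 2) (hn : 1 ≤ n)
    (D : ReesWeyl p n (PowerSeries (ZMod p)) PowerSeries.X →ₗ[PowerSeries (ZMod p)]
      ReesWeyl p n (PowerSeries (ZMod p)) PowerSeries.X)
    (hD : ∀ m m' : ReesWeyl p n (PowerSeries (ZMod p)) PowerSeries.X,
      D (m * m') = D m * m' + m * D m') :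
    ∃ a : ReesWeyl p n (PowerSeries (ZMod p)) PowerSeries.X,
      ∀ m : ReesWeyl p n (PowerSeries (ZMod p)) PowerSeries.X,
        algebraMap (PowerSeries (ZMod p)) (ReesWeyl p n (PowerSeries (ZMod p)) PowerSeries.X)
            PowerSeries.X * D m = a * m - m * a := by
  have : Fact p.Prime := ⟨hp⟩
  have : CharP (PowerSeries (ZMod p)) p :=
    charP_of_injective_algebraMap (algebraMap (ZMod p) (PowerSeries (ZMod p))).injective p
  have hf : ∀ i, i + 1 < p → ((i + 1 : ℕ) : PowerSeries (ZMod p)) *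
      PowerSeries.C ((-1 : ZMod p) ^ (i + 1) * ((i + 1).factorial : ZMod p)⁻¹) =
      - PowerSeries.C ((-1 : ZMod p) ^ i * (i.factorial : ZMod p)⁻¹) := by
    intro i hi
    rw [← map_natCast (PowerSeries.C (R := ZMod p)), ← map_mul, ← map_neg]
    congr 1
    have h1 : ((i + 1 : ℕ) : ZMod p) ≠ 0 := by
      rw [Ne, ZMod.natCast_eq_zero_iff]
      exact fun hd => absurd (Nat.le_of_dvd (by omega) hd) (by omega)
    have h2 : ((i.factorial : ℕ) : ZMod p) ≠ 0 := by
      rw [Ne, ZMod.natCast_eq_zero_iff, hp.dvd_factorial]; omega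
    rw [Nat.factorial_succ, Nat.cast_mul, pow_succ]
    field_simp
  exact RWaux.WS.mainThm (RWaux.theWS p n (PowerSeries (ZMod p)) PowerSeries.X)
    (f := fun i => PowerSeries.C ((-1 : ZMod p) ^ i * (i.factorial : ZMod p)⁻¹))
    (by simp) hf hp (CharP.cast_eq_zero _ _)
    (fun r hr => (mul_eq_zero.1 hr).resolve_left PowerSeries.X_ne_zero) D hD
end
end
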